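/- arXiv:1509.08224 — 3 statements merged into one kernel-verified Lean document; each statement's English description precedes it below -/
import Mathlib

section
/- Let c ∈ (0,c₁) (with c₁ as in the existence result) and let (y₁,y₂) be the unique pair with 1 < y₁ < y_c ≤ y_v(c) < y₂ solving the tangency system. Set A = H_l'(y₁) and B = H_l(y₁) − H_l'(y₁)·y₁, and define W(y;c) = H_l(y) for 1 ≤ y ≤ y₁, W(y;c) = A·y + B for y₁ < y < y₂, and W(y;c) = H_r(y;c) for y ≥ y₂. Then W(·;c) is continuously differentiable on [1,∞), convex, nonpositive, satisfies W(y;c) ≤ H(y;c) for all y ≥ 1, and every convex, nonpositive function g on [1,∞) with g ≤ H(·;c) satisfies g ≤ W(·;c); moreover the straight line y ↦ A·y + B lies below H(·;c) on (1,∞). -/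
/-- The double-tangency system. -/
def TangencySystem (Hl Hrc : ℝ → ℝ) (y₁ y₂ : ℝ) : Prop :=
  deriv Hl y₁ = deriv Hrc y₂ ∧
  Hl y₁ - deriv Hl y₁ * y₁ = Hrc y₂ - deriv Hrc y₂ * y₂

/-! In the coordinate `x = log y / (2 s)`, `s = √(2 α)`, the function `y ↦ √y * h x` has second
derivative of the sign of `h'' - s² h`. For the payoffs at hand this expression is elementary: it
shows that `H_l` is convex and then strictly concave on `[1, ∞)`, and that `H_r` is concave and then
convex on `(0, ∞)`, the two graphs crossing once, at `y_c`.

For two such functions the common tangent line lies below `H = min H_l H_r`: on the convex branches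
because it is tangent there, on the concave branches because it is below at their endpoints. Strict
concavity forces the left contact point into the convex branch of `H_l`. Hence `W` is convex, its
three pieces being convex and having first-order contact. Any convex function below `H` is below
the chord from `(y₁, H y₁)` to `(y₂, H y₂)`, which is the tangent line, so `W` is the greatest.
Finally `W ≤ 0`, because `W` is convex, `W 1 = H_l 1 ≤ 0`, and `W = H_r ≤ 0` for large `y`. -/

open Set Filter Topology Real

section ConvexFunctions

variable {S : Set ℝ} {f : ℝ → ℝ} {x y m d A B : ℝ}

theorem convexOn_mul_add (A B : ℝ) (hS : Convex ℝ S) : ConvexOn ℝ S fun y => A * y + B :=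
  ((A • LinearMap.id : ℝ →ₗ[ℝ] ℝ).convexOn hS).add_const B

theorem le_mul_add_of_convexOn (hf : ConvexOn ℝ S f) (hx : x ∈ S) (hy : y ∈ S)
    (hfx : f x ≤ A * x + B) (hfy : f y ≤ A * y + B) {t : ℝ} (ht : t ∈ Icc x y) :
    f t ≤ A * t + B := by
  have hconv : ConvexOn ℝ S fun t => f t + (-A * t + -B) :=
    hf.add (convexOn_mul_add (-A) (-B) hf.1)
  have hmax := hconv.le_max_of_mem_Icc hx hy ht
  have : max (f x + (-A * x + -B)) (f y + (-A * y + -B)) ≤ 0 :=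
    max_le (by linarith) (by linarith)
  linarith

theorem mul_add_le_of_concaveOn (hf : ConcaveOn ℝ S f) (hx : x ∈ S) (hy : y ∈ S)
    (hfx : A * x + B ≤ f x) (hfy : A * y + B ≤ f y) {t : ℝ} (ht : t ∈ Icc x y) :
    A * t + B ≤ f t := by
  have := le_mul_add_of_convexOn (A := -A) (B := -B) hf.neg hx hy
    (by simp only [Pi.neg_apply]; linarith) (by simp only [Pi.neg_apply]; linarith) ht
  simp only [Pi.neg_apply] at this
  linarith

theorem convexOn_of_le_mul_add (hS : Convex ℝ S)
    (h : ∀ x ∈ S, ∀ y ∈ S, ∀ A B, f x = A * x + B → f y = A * y + B →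
      ∀ t ∈ Ioo x y, f t ≤ A * t + B) : ConvexOn ℝ S f := by
  refine LinearOrder.convexOn_of_lt hS fun x hx y hy hxy a b ha hb hab => ?_
  obtain ⟨A, B, hfx, hfy⟩ : ∃ A B, f x = A * x + B ∧ f y = A * y + B := by
    have : y - x ≠ 0 := (sub_pos.2 hxy).ne'
    exact ⟨(f y - f x) / (y - x), f x - (f y - f x) / (y - x) * x, by ring, by field_simp; ring⟩
  have ht : a • x + b • y ∈ Ioo x y := by
    rw [← openSegment_eq_Ioo hxy]
    exact ⟨a, b, ha, hb, hab, rfl⟩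
  calc f (a • x + b • y) ≤ A * (a • x + b • y) + B := h x hx y hy A B hfx hfy _ ht
    _ = a • f x + b • f y := by
      simp only [hfx, hfy, smul_eq_mul]
      linear_combination -B * hab

theorem tangent_le_of_convexOn (hf : ConvexOn ℝ S f) (hx : x ∈ S) (hd : HasDerivAt f d x)
    (hy : y ∈ S) : f x + d * (y - x) ≤ f y := by
  rcases lt_trichotomy x y with hxy | rfl | hyx
  · have := hf.le_slope_of_hasDerivAt hx hy hxy hd
    rw [slope_def_field, le_div_iff₀ (sub_pos.2 hxy)] at this
    linarith
  · simp
  · have := hf.slope_le_of_hasDerivAt hy hx hyx hd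
    rw [slope_def_field, div_le_iff₀ (sub_pos.2 hyx)] at this
    linarith

theorem convexOn_of_convexOn_inter_Iic_Ici (hS : Convex ℝ S) (hm : m ∈ S)
    (hl : ConvexOn ℝ (S ∩ Iic m) f) (hr : ConvexOn ℝ (S ∩ Ici m) f) (hd : HasDerivAt f d m) :
    ConvexOn ℝ S f := by
  have hml : m ∈ S ∩ Iic m := ⟨hm, le_refl m⟩
  have hmr : m ∈ S ∩ Ici m := ⟨hm, le_refl m⟩
  have tangent_le {z : ℝ} (hz : z ∈ S) : f m + d * (z - m) ≤ f z := by
    rcases le_total z m with hzm | hmz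
    · exact tangent_le_of_convexOn hl hml hd ⟨hz, hzm⟩
    · exact tangent_le_of_convexOn hr hmr hd ⟨hz, hmz⟩
  refine convexOn_of_le_mul_add hS fun x hx y hy A B hfx hfy t ht => ?_
  rcases le_total y m with hym | hmy
  · exact le_mul_add_of_convexOn hl ⟨hx, ht.1.le.trans (ht.2.le.trans hym)⟩ ⟨hy, hym⟩
      hfx.le hfy.le (Ioo_subset_Icc_self ht)
  rcases le_total m x with hmx | hxm
  · exact le_mul_add_of_convexOn hr ⟨hx, hmx⟩ ⟨hy, hmy⟩ hfx.le hfy.le (Ioo_subset_Icc_self ht)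
  have hfm : f m ≤ A * m + B := by
    have := le_mul_add_of_convexOn (A := A) (B := B)
      (convexOn_mul_add d (f m - d * m) hS) hx hy (by linarith [tangent_le hx])
      (by linarith [tangent_le hy]) ⟨hxm, hmy⟩
    linarith
  rcases le_total t m with htm | hmt
  · exact le_mul_add_of_convexOn hl ⟨hx, hxm⟩ hml hfx.le hfm ⟨ht.1.le, htm⟩
  · exact le_mul_add_of_convexOn hr hmr ⟨hy, hmy⟩ hfm hfy.le ⟨hmt, ht.2.le⟩

theorem le_of_convexOn_Ici_of_frequently_le {a M : ℝ} (hf : ConvexOn ℝ (Ici a) f) (ha : f a ≤ M)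
    (hM : ∃ᶠ y in atTop, f y ≤ M) (hy : a ≤ y) : f y ≤ M := by
  obtain ⟨z, hyz, hz⟩ := frequently_atTop.1 hM y
  exact (hf.le_max_of_mem_Icc self_mem_Ici (hy.trans hyz) ⟨hy, hyz⟩).trans (max_le ha hz)

end ConvexFunctions

section Gluing

/-- The function that is `f` on `(-∞, m]` and `g` on `(m, ∞)`. -/
noncomputable def glue (m : ℝ) (f g : ℝ → ℝ) (x : ℝ) : ℝ :=
  if x ≤ m then f x else g x

variable {f g : ℝ → ℝ} {m x d : ℝ}

theorem glue_of_le (hx : x ≤ m) : glue m f g x = f x := if_pos hx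

theorem glue_of_gt (hx : m < x) : glue m f g x = g x := if_neg hx.not_ge

theorem glue_of_ge (h : f m = g m) (hx : m ≤ x) : glue m f g x = g x := by
  rcases hx.eq_or_lt with rfl | hx
  · rw [glue_of_le le_rfl, h]
  · exact glue_of_gt hx

theorem eq_glue {F : ℝ → ℝ} (hf : ∀ x ≤ m, F x = f x) (hg : ∀ x, m < x → F x = g x) :
    F = glue m f g := by
  ext x
  rcases le_or_gt x m with hx | hx
  · rw [hf x hx, glue_of_le hx]
  · rw [hg x hx, glue_of_gt hx]

theorem glue_eventuallyEq_of_lt (hx : x < m) : glue m f g =ᶠ[𝓝 x] f := by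
  filter_upwards [Iio_mem_nhds hx] with z hz using glue_of_le (le_of_lt hz)

theorem glue_eventuallyEq_of_gt (hx : m < x) : glue m f g =ᶠ[𝓝 x] g := by
  filter_upwards [Ioi_mem_nhds hx] with z hz using glue_of_gt hz

theorem glue_eq_comp_min_add_comp_max (h : f m = g m) (x : ℝ) :
    glue m f g x = f (min x m) + g (max x m) - f m := by
  rcases le_total x m with hx | hx
  · rw [glue_of_le hx, min_eq_left hx, max_eq_right hx, h]
    ring
  · rw [glue_of_ge h hx, min_eq_right hx, max_eq_left hx]
    ring

theorem continuousOn_glue {U : Set ℝ} (h : f m = g m) (hm : m ∈ U) (hf : ContinuousOn f U)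
    (hg : ContinuousOn g U) : ContinuousOn (glue m f g) U := by
  have hmin : MapsTo (fun x => min x m) U U := fun x hx => by
    rcases min_choice x m with h | h <;> simpa only [h]
  have hmax : MapsTo (fun x => max x m) U U := fun x hx => by
    rcases max_choice x m with h | h <;> simpa only [h]
  exact (((hf.comp (by fun_prop) hmin).add (hg.comp (by fun_prop) hmax)).sub
    continuousOn_const).congr fun x _ => glue_eq_comp_min_add_comp_max h x

/-- The graphs of `f` and `g` meet at abscissa `m` and have there the same tangent, of slope `d`. -/
structure FirstOrderContact (f g : ℝ → ℝ) (m d : ℝ) : Prop where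
  eq : f m = g m
  hasDerivAt_left : HasDerivAt f d m
  hasDerivAt_right : HasDerivAt g d m

namespace FirstOrderContact

theorem hasDerivAt_glue (h : FirstOrderContact f g m d) : HasDerivAt (glue m f g) d m := by
  have hl : HasDerivWithinAt (glue m f g) d (Iic m) m :=
    h.hasDerivAt_left.hasDerivWithinAt.congr (fun x hx => glue_of_le hx) (glue_of_le le_rfl)
  have hr : HasDerivWithinAt (glue m f g) d (Ici m) m :=
    h.hasDerivAt_right.hasDerivWithinAt.congr (fun x hx => glue_of_ge h.eq hx)
      (glue_of_ge h.eq le_rfl)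
  simpa only [Iic_union_Ici, hasDerivWithinAt_univ] using hl.union hr

theorem deriv_glue (h : FirstOrderContact f g m d) :
    deriv (glue m f g) = glue m (deriv f) (deriv g) := by
  ext x
  rcases lt_trichotomy x m with hx | rfl | hx
  · rw [(glue_eventuallyEq_of_lt hx).deriv_eq, glue_of_le hx.le]
  · rw [h.hasDerivAt_glue.deriv, glue_of_le le_rfl, h.hasDerivAt_left.deriv]
  · rw [(glue_eventuallyEq_of_gt hx).deriv_eq, glue_of_gt hx]

theorem contDiffOn_glue {U : Set ℝ} (h : FirstOrderContact f g m d) (hU : IsOpen U) (hm : m ∈ U)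
    (hf : ContDiffOn ℝ 1 f U) (hg : ContDiffOn ℝ 1 g U) : ContDiffOn ℝ 1 (glue m f g) U := by
  have hderiv : deriv f m = deriv g m := by
    rw [h.hasDerivAt_left.deriv, h.hasDerivAt_right.deriv]
  have hdiff {k : ℝ → ℝ} (hk : ContDiffOn ℝ 1 k U) {x : ℝ} (hx : x ∈ U) : DifferentiableAt ℝ k x :=
    (hk.differentiableOn one_ne_zero).differentiableAt (hU.mem_nhds hx)
  rw [show (1 : WithTop ℕ∞) = 0 + 1 from rfl, contDiffOn_succ_iff_deriv_of_isOpen hU,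
    contDiffOn_zero, h.deriv_glue]
  refine ⟨fun x hx => DifferentiableAt.differentiableWithinAt ?_, by simp,
    continuousOn_glue hderiv hm (hf.continuousOn_deriv_of_isOpen hU le_rfl)
      (hg.continuousOn_deriv_of_isOpen hU le_rfl)⟩
  rcases lt_trichotomy x m with hxm | rfl | hxm
  · exact (hdiff hf hx).congr_of_eventuallyEq (glue_eventuallyEq_of_lt hxm)
  · exact h.hasDerivAt_glue.differentiableAt
  · exact (hdiff hg hx).congr_of_eventuallyEq (glue_eventuallyEq_of_gt hxm)

theorem convexOn_glue {S : Set ℝ} (h : FirstOrderContact f g m d) (hS : Convex ℝ S) (hm : m ∈ S)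
    (hf : ConvexOn ℝ (S ∩ Iic m) f) (hg : ConvexOn ℝ (S ∩ Ici m) g) :
    ConvexOn ℝ S (glue m f g) :=
  convexOn_of_convexOn_inter_Iic_Ici hS hm (hf.congr fun _ hx => (glue_of_le hx.2).symm)
    (hg.congr fun _ hx => (glue_of_ge h.eq hx.2).symm) h.hasDerivAt_glue

end FirstOrderContact

end Gluing

section CommonTangent

/-- The configuration of two obstacles on `[a, ∞)` whose minimum is bridged by a common tangent:
`f` is the smaller one up to the crossing point `p` and `g` from `p` on; `f` is convex up to `q` and
strictly concave afterwards, while `g` is concave between `p` and `r` (void if `r < p`) and convex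
from `r` on. -/
structure ConvexConcaveCrossing (f g : ℝ → ℝ) (a q p r : ℝ) : Prop where
  le_inflection : a ≤ q
  convexOn_left : ConvexOn ℝ (Icc a q) f
  strictConcaveOn_left : StrictConcaveOn ℝ (Ici q) f
  concaveOn_right : ConcaveOn ℝ (Icc p r) g
  convexOn_right : ConvexOn ℝ (Ici r) g
  left_le_right : ∀ y ∈ Icc a p, f y ≤ g y
  right_le_left : ∀ y, p ≤ y → g y ≤ f y

/-- The line `y ↦ A * y + B` is tangent to the graph of `f` at `y₁` and to that of `g` at `y₂`. -/
structure IsCommonTangent (f g : ℝ → ℝ) (A B y₁ y₂ : ℝ) : Prop where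
  contact_left : FirstOrderContact f (fun y => A * y + B) y₁ A
  contact_right : FirstOrderContact (fun y => A * y + B) g y₂ A

/-- The function `W`: the obstacles `f` and `g` joined along a segment of their common tangent. -/
noncomputable def commonTangentPatch (f g : ℝ → ℝ) (A B y₁ y₂ : ℝ) : ℝ → ℝ :=
  glue y₁ f (glue y₂ (fun y => A * y + B) g)

variable {f g : ℝ → ℝ} {a q p r A B y₁ y₂ y : ℝ}

theorem TangencySystem.congr {F G : ℝ → ℝ} (h : TangencySystem F G y₁ y₂) (hF : F =ᶠ[𝓝 y₁] f)
    (hG : G =ᶠ[𝓝 y₂] g) : TangencySystem f g y₁ y₂ := by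
  simpa only [TangencySystem, hF.deriv_eq, hF.eq_of_nhds, hG.deriv_eq, hG.eq_of_nhds] using h

theorem TangencySystem.isCommonTangent (h : TangencySystem f g y₁ y₂)
    (hf : DifferentiableAt ℝ f y₁) (hg : DifferentiableAt ℝ g y₂) :
    IsCommonTangent f g (deriv f y₁) (f y₁ - deriv f y₁ * y₁) y₁ y₂ := by
  have hline (y : ℝ) : HasDerivAt (fun y => deriv f y₁ * y + (f y₁ - deriv f y₁ * y₁))
      (deriv f y₁) y := (hasDerivAt_const_mul _).add_const _
  obtain ⟨hslope, hintercept⟩ := h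
  exact ⟨⟨by ring, hf.hasDerivAt, hline y₁⟩,
    ⟨by rw [hintercept, hslope]; ring, hline y₂, hslope ▸ hg.hasDerivAt⟩⟩

namespace IsCommonTangent

theorem le_right_of_convexOn (h : IsCommonTangent f g A B y₁ y₂) {S : Set ℝ}
    (hg : ConvexOn ℝ S g) (hy₂ : y₂ ∈ S) (hy : y ∈ S) : A * y + B ≤ g y := by
  have := tangent_le_of_convexOn hg hy₂ h.contact_right.hasDerivAt_right hy
  rw [← h.contact_right.eq] at this
  linarith

theorem le_left_of_convexOn (h : IsCommonTangent f g A B y₁ y₂) {S : Set ℝ}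
    (hf : ConvexOn ℝ S f) (hy₁ : y₁ ∈ S) (hy : y ∈ S) : A * y + B ≤ f y := by
  have := tangent_le_of_convexOn hf hy₁ h.contact_left.hasDerivAt_left hy
  rw [h.contact_left.eq] at this
  linarith

theorem le_left_max (h : IsCommonTangent f g A B y₁ y₂) (hfg : ConvexConcaveCrossing f g a q p r)
    (hr : r ≤ y₂) : A * max p r + B ≤ f (max p r) :=
  (h.le_right_of_convexOn hfg.convexOn_right hr (le_max_right p r)).trans
    (hfg.right_le_left _ (le_max_left p r))

theorem lt_inflection (h : IsCommonTangent f g A B y₁ y₂)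
    (hfg : ConvexConcaveCrossing f g a q p r) (hp : y₁ < p) (hr : r ≤ y₂) : y₁ < q := by
  by_contra! hq
  have hlt : y₁ < max p r := hp.trans_le (le_max_left p r)
  have hslope := hfg.strictConcaveOn_left.slope_lt_of_hasDerivAt hq (hq.trans hlt.le) hlt
    h.contact_left.hasDerivAt_left
  rw [slope_def_field, div_lt_iff₀ (sub_pos.2 hlt), h.contact_left.eq] at hslope
  linarith [h.le_left_max hfg hr]

theorem le_left (h : IsCommonTangent f g A B y₁ y₂) (hfg : ConvexConcaveCrossing f g a q p r)
    (ha : a ≤ y₁) (hp : y₁ < p) (hr : r ≤ y₂) (hy : y ∈ Icc a (max p r)) : A * y + B ≤ f y := by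
  have hconvex {z : ℝ} (hz : z ∈ Icc a q) : A * z + B ≤ f z :=
    h.le_left_of_convexOn hfg.convexOn_left ⟨ha, (h.lt_inflection hfg hp hr).le⟩ hz
  rcases le_total y q with hyq | hqy
  · exact hconvex ⟨hy.1, hyq⟩
  · exact mul_add_le_of_concaveOn hfg.strictConcaveOn_left.concaveOn self_mem_Ici
      (hqy.trans hy.2) (hconvex ⟨hfg.le_inflection, le_rfl⟩) (h.le_left_max hfg hr) ⟨hqy, hy.2⟩

theorem le_right (h : IsCommonTangent f g A B y₁ y₂) (hfg : ConvexConcaveCrossing f g a q p r)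
    (ha : a ≤ y₁) (hp : y₁ < p) (hr : r ≤ y₂) (hy : p ≤ y) : A * y + B ≤ g y := by
  have hconvex {z : ℝ} (hz : r ≤ z) : A * z + B ≤ g z :=
    h.le_right_of_convexOn hfg.convexOn_right hr hz
  have hap : a ≤ p := ha.trans hp.le
  rcases le_total r y with hry | hyr
  · exact hconvex hry
  · exact mul_add_le_of_concaveOn hfg.concaveOn_right ⟨le_rfl, hy.trans hyr⟩ ⟨hy.trans hyr, le_rfl⟩
      ((h.le_left hfg ha hp hr ⟨hap, le_max_left p r⟩).trans (hfg.left_le_right p ⟨hap, le_rfl⟩))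
      (hconvex le_rfl) ⟨hy, hyr⟩

theorem le_min (h : IsCommonTangent f g A B y₁ y₂) (hfg : ConvexConcaveCrossing f g a q p r)
    (ha : a ≤ y₁) (hp : y₁ < p) (hr : r ≤ y₂) (hy : a ≤ y) : A * y + B ≤ min (f y) (g y) := by
  rcases le_total y p with hyp | hpy
  · rw [min_eq_left (hfg.left_le_right y ⟨hy, hyp⟩)]
    exact h.le_left hfg ha hp hr ⟨hy, hyp.trans (le_max_left p r)⟩
  · rw [min_eq_right (hfg.right_le_left y hpy)]
    exact h.le_right hfg ha hp hr hpy

theorem contact_left_glue (h : IsCommonTangent f g A B y₁ y₂) (hlt : y₁ < y₂) :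
    FirstOrderContact f (glue y₂ (fun y => A * y + B) g) y₁ A where
  eq := by rw [h.contact_left.eq, glue_of_le hlt.le]
  hasDerivAt_left := h.contact_left.hasDerivAt_left
  hasDerivAt_right :=
    h.contact_left.hasDerivAt_right.congr_of_eventuallyEq (glue_eventuallyEq_of_lt hlt)

theorem eqOn_patch (h : IsCommonTangent f g A B y₁ y₂) {S : Set ℝ} {W : ℝ → ℝ}
    (hWl : ∀ y ∈ S, y ≤ y₁ → W y = f y) (hWm : ∀ y ∈ S, y₁ < y → y < y₂ → W y = A * y + B)
    (hWr : ∀ y ∈ S, y₂ ≤ y → W y = g y) : EqOn W (commonTangentPatch f g A B y₁ y₂) S := by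
  intro y hy
  unfold commonTangentPatch
  rcases le_or_gt y y₁ with hy₁ | hy₁
  · rw [hWl y hy hy₁, glue_of_le hy₁]
  rw [glue_of_gt hy₁]
  rcases lt_or_ge y y₂ with hy₂ | hy₂
  · rw [hWm y hy hy₁ hy₂, glue_of_le hy₂.le]
  · rw [hWr y hy hy₂, glue_of_ge h.contact_right.eq hy₂]

theorem contDiffOn_patch (h : IsCommonTangent f g A B y₁ y₂) {U : Set ℝ} (hU : IsOpen U)
    (hf : ContDiffOn ℝ 1 f U) (hg : ContDiffOn ℝ 1 g U) (hy₁ : y₁ ∈ U) (hy₂ : y₂ ∈ U)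
    (hlt : y₁ < y₂) : ContDiffOn ℝ 1 (commonTangentPatch f g A B y₁ y₂) U :=
  (h.contact_left_glue hlt).contDiffOn_glue hU hy₁ hf
    (h.contact_right.contDiffOn_glue hU hy₂ (by fun_prop) hg)

theorem convexOn_patch (h : IsCommonTangent f g A B y₁ y₂)
    (hfg : ConvexConcaveCrossing f g a q p r) (ha : a ≤ y₁) (hp₁ : y₁ < p) (hp₂ : p < y₂)
    (hr : r ≤ y₂) : ConvexOn ℝ (Ici a) (commonTangentPatch f g A B y₁ y₂) := by
  have hlt : y₁ < y₂ := hp₁.trans hp₂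
  have htail : ConvexOn ℝ (Ici a) (glue y₂ (fun y => A * y + B) g) :=
    h.contact_right.convexOn_glue (convex_Ici a) (ha.trans hlt.le)
      (convexOn_mul_add A B ((convex_Ici a).inter (convex_Iic y₂)))
      (hfg.convexOn_right.subset (fun _ hy => hr.trans hy.2) ((convex_Ici a).inter (convex_Ici y₂)))
  exact (h.contact_left_glue hlt).convexOn_glue (convex_Ici a) ha
    (hfg.convexOn_left.subset (fun _ hy => ⟨hy.1, hy.2.trans (h.lt_inflection hfg hp₁ hr).le⟩)
      ((convex_Ici a).inter (convex_Iic y₁)))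
    (htail.subset inter_subset_left ((convex_Ici a).inter (convex_Ici y₁)))

theorem patch_le_min (h : IsCommonTangent f g A B y₁ y₂)
    (hfg : ConvexConcaveCrossing f g a q p r) (ha : a ≤ y₁) (hp₁ : y₁ < p) (hp₂ : p < y₂)
    (hr : r ≤ y₂) (hy : a ≤ y) : commonTangentPatch f g A B y₁ y₂ y ≤ min (f y) (g y) := by
  unfold commonTangentPatch
  rcases le_or_gt y y₁ with hy₁ | hy₁
  · rw [glue_of_le hy₁, min_eq_left (hfg.left_le_right y ⟨hy, hy₁.trans hp₁.le⟩)]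
  rw [glue_of_gt hy₁]
  rcases le_or_gt y y₂ with hy₂ | hy₂
  · rw [glue_of_le hy₂]
    exact h.le_min hfg ha hp₁ hr hy
  · rw [glue_of_gt hy₂, min_eq_right (hfg.right_le_left y (hp₂.trans hy₂).le)]

theorem le_patch (h : IsCommonTangent f g A B y₁ y₂) (ha : a ≤ y₁) (hlt : y₁ < y₂) {k : ℝ → ℝ}
    (hk : ConvexOn ℝ (Ici a) k) (hkfg : ∀ y, a ≤ y → k y ≤ min (f y) (g y)) (hy : a ≤ y) :
    k y ≤ commonTangentPatch f g A B y₁ y₂ y := by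
  have hkf {z : ℝ} (hz : a ≤ z) : k z ≤ f z := (hkfg z hz).trans (min_le_left _ _)
  have hkg {z : ℝ} (hz : a ≤ z) : k z ≤ g z := (hkfg z hz).trans (min_le_right _ _)
  have ha₂ : a ≤ y₂ := ha.trans hlt.le
  unfold commonTangentPatch
  rcases le_or_gt y y₁ with hy₁ | hy₁
  · exact (hkf hy).trans_eq (glue_of_le hy₁).symm
  rw [glue_of_gt hy₁]
  rcases le_or_gt y y₂ with hy₂ | hy₂
  · rw [glue_of_le hy₂]
    exact le_mul_add_of_convexOn hk ha ha₂ ((hkf ha).trans_eq h.contact_left.eq)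
      ((hkg ha₂).trans_eq h.contact_right.eq.symm) ⟨hy₁.le, hy₂⟩
  · exact (hkg hy).trans_eq (glue_of_gt hy₂).symm

end IsCommonTangent

end CommonTangent

section SqrtLift

/-- The coordinate `x = log y / (2 s)` on `(0, ∞)`. -/
noncomputable def logCoord (s y : ℝ) : ℝ := log y / (2 * s)

/-- The inverse of `logCoord`; with `s = √(2 α)` it is the map `Ψ`. -/
noncomputable def expCoord (s x : ℝ) : ℝ := exp (2 * s * x)

/-- The obstacle `y ↦ √y * h x` on `(0, ∞)` coming from a payoff `h` in the logarithmic
coordinate `x`. -/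
noncomputable def sqrtLift (s : ℝ) (h : ℝ → ℝ) (y : ℝ) : ℝ := √y * h (logCoord s y)

/-- The function `h` is twice differentiable with `h'' - s² h = κ`. Up to a positive factor, `κ` is
the second derivative of `sqrtLift s h`. -/
def HasLiftCurvature (s : ℝ) (h κ : ℝ → ℝ) : Prop :=
  ∃ h' : ℝ → ℝ, (∀ x, HasDerivAt h (h' x) x) ∧ ∀ x, HasDerivAt h' (s ^ 2 * h x + κ x) x

variable {s m d x y : ℝ} {f g h k κ : ℝ → ℝ} {S : Set ℝ}

theorem expCoord_pos : 0 < expCoord s x := exp_pos _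

theorem expCoord_zero : expCoord s 0 = 1 := by simp [expCoord]

theorem logCoord_expCoord (hs : 0 < s) : logCoord s (expCoord s x) = x := by
  simp only [logCoord, expCoord, log_exp]
  field_simp

theorem logCoord_le_iff (hs : 0 < s) (hy : 0 < y) : logCoord s y ≤ x ↔ y ≤ expCoord s x := by
  rw [logCoord, expCoord, div_le_iff₀' (by positivity), log_le_iff_le_exp hy]

theorem lt_logCoord_iff (hs : 0 < s) (hy : 0 < y) : x < logCoord s y ↔ expCoord s x < y := by
  rw [← not_le, logCoord_le_iff hs hy, not_le]

theorem le_logCoord_iff (hs : 0 < s) (hy : 0 < y) : x ≤ logCoord s y ↔ expCoord s x ≤ y := by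
  rw [logCoord, expCoord, le_div_iff₀' (by positivity), le_log_iff_exp_le hy]

theorem hasDerivAt_logCoord (hy : 0 < y) : HasDerivAt (logCoord s) (y⁻¹ / (2 * s)) y :=
  (hasDerivAt_log hy.ne').div_const _

theorem hasDerivAt_sqrtLift (hs : 0 < s) (hy : 0 < y) (hh : HasDerivAt h d (logCoord s y)) :
    HasDerivAt (sqrtLift s h) ((s * h (logCoord s y) + d) / (2 * s * √y)) y := by
  have : 0 < √y := sqrt_pos.2 hy
  refine ((hasDerivAt_sqrt hy.ne').mul (hh.comp y (hasDerivAt_logCoord hy))).congr_deriv ?_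
  simp only [Function.comp_apply]
  field_simp
  rw [sq_sqrt hy.le]
  field_simp

theorem hasDerivAt_comp_logCoord_div_sqrt (hs : 0 < s) (hy : 0 < y)
    (hk : HasDerivAt k d (logCoord s y)) :
    HasDerivAt (fun y => k (logCoord s y) / (2 * s * √y))
      ((d - s * k (logCoord s y)) / (4 * s ^ 2 * (y * √y))) y := by
  have : 0 < √y := sqrt_pos.2 hy
  refine ((hk.comp y (hasDerivAt_logCoord hy)).div ((hasDerivAt_sqrt hy.ne').const_mul (2 * s))
    (by positivity)).congr_deriv ?_
  simp only [Function.comp_apply]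
  field_simp
  rw [sq_sqrt hy.le]
  field_simp
  ring

theorem HasLiftCurvature.exists_hasDerivAt (h_curv : HasLiftCurvature s h κ) (hs : 0 < s) :
    ∃ F' : ℝ → ℝ, ∀ y, 0 < y → HasDerivAt (sqrtLift s h) (F' y) y ∧
      HasDerivAt F' (κ (logCoord s y) / (4 * s ^ 2 * (y * √y))) y := by
  obtain ⟨h', hh, hh'⟩ := h_curv
  refine ⟨_, fun y hy => ⟨hasDerivAt_sqrtLift hs hy (hh _), ?_⟩⟩
  refine (hasDerivAt_comp_logCoord_div_sqrt (k := fun x => s * h x + h' x) hs hy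
    (((hh _).const_mul s).add (hh' _))).congr_deriv ?_
  ring

theorem HasLiftCurvature.convexOn_sqrtLift (h_curv : HasLiftCurvature s h κ) (hs : 0 < s)
    (hS : Convex ℝ S) (hS₀ : S ⊆ Ioi 0) (hκ : ∀ y ∈ interior S, 0 ≤ κ (logCoord s y)) :
    ConvexOn ℝ S (sqrtLift s h) := by
  obtain ⟨F', hF⟩ := h_curv.exists_hasDerivAt hs
  have hpos {y : ℝ} (hy : y ∈ interior S) : 0 < y := hS₀ (interior_subset hy)
  refine convexOn_of_hasDerivWithinAt2_nonneg hS
    (fun y hy => (hF y (hS₀ hy)).1.continuousAt.continuousWithinAt)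
    (fun y hy => (hF y (hpos hy)).1.hasDerivWithinAt)
    (fun y hy => (hF y (hpos hy)).2.hasDerivWithinAt) fun y hy => ?_
  have := hpos hy
  have := hκ y hy
  positivity

theorem HasLiftCurvature.neg (h_curv : HasLiftCurvature s h κ) : HasLiftCurvature s (-h) (-κ) := by
  obtain ⟨h', hh, hh'⟩ := h_curv
  exact ⟨-h', fun x => (hh x).neg, fun x => (hh' x).neg.congr_deriv (by simp; ring)⟩

theorem HasLiftCurvature.concaveOn_sqrtLift (h_curv : HasLiftCurvature s h κ) (hs : 0 < s)
    (hS : Convex ℝ S) (hS₀ : S ⊆ Ioi 0) (hκ : ∀ y ∈ interior S, κ (logCoord s y) ≤ 0) :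
    ConcaveOn ℝ S (sqrtLift s h) := by
  have hconvex := h_curv.neg.convexOn_sqrtLift hs hS hS₀ fun y hy => neg_nonneg.2 (hκ y hy)
  refine neg_convexOn_iff.1 (hconvex.congr fun y _ => ?_)
  simp [sqrtLift]

theorem HasLiftCurvature.strictConcaveOn_sqrtLift (h_curv : HasLiftCurvature s h κ) (hs : 0 < s)
    (hS : Convex ℝ S) (hS₀ : S ⊆ Ioi 0) (hκ : ∀ y ∈ interior S, κ (logCoord s y) < 0) :
    StrictConcaveOn ℝ S (sqrtLift s h) := by
  obtain ⟨F', hF⟩ := h_curv.exists_hasDerivAt hs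
  refine strictConcaveOn_of_deriv2_neg hS
    (fun y hy => (hF y (hS₀ hy)).1.continuousAt.continuousWithinAt) fun y hy => ?_
  have hy₀ : 0 < y := hS₀ (interior_subset hy)
  have hderiv : deriv (sqrtLift s h) =ᶠ[𝓝 y] F' := by
    filter_upwards [Ioi_mem_nhds hy₀] with z hz using (hF z hz).1.deriv
  rw [Function.iterate_succ_apply, Function.iterate_one, hderiv.deriv_eq, (hF y hy₀).2.deriv]
  exact div_neg_of_neg_of_pos (hκ y hy) (by positivity)

theorem contDiffOn_sqrtLift {n : WithTop ℕ∞} (hh : ContDiff ℝ n h) :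
    ContDiffOn ℝ n (sqrtLift s h) (Ioi 0) := by
  have hne : ∀ y ∈ Ioi (0 : ℝ), y ≠ 0 := fun y hy => (mem_Ioi.1 hy).ne'
  exact (contDiffOn_id.sqrt hne).mul
    (hh.comp_contDiffOn ((contDiffOn_id.log hne).div_const (2 * s)))

protected theorem FirstOrderContact.sqrtLift (h : FirstOrderContact f g m d) (hs : 0 < s) :
    FirstOrderContact (sqrtLift s f) (sqrtLift s g) (expCoord s m)
      ((s * f m + d) / (2 * s * √(expCoord s m))) := by
  have hm : logCoord s (expCoord s m) = m := logCoord_expCoord hs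
  have hderiv {k : ℝ → ℝ} (hk : HasDerivAt k d m) : HasDerivAt (sqrtLift s k)
      ((s * k m + d) / (2 * s * √(expCoord s m))) (expCoord s m) := by
    rw [← hm] at hk
    simpa only [hm] using hasDerivAt_sqrtLift hs expCoord_pos hk
  refine ⟨by simp only [sqrtLift, hm, h.eq], hderiv h.hasDerivAt_left, ?_⟩
  rw [h.eq]
  exact hderiv h.hasDerivAt_right

theorem sqrtLift_glue (hs : 0 < s) (hy : 0 < y) :
    sqrtLift s (glue m f g) y = glue (expCoord s m) (sqrtLift s f) (sqrtLift s g) y := by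
  simp only [glue, sqrtLift, logCoord_le_iff hs hy, mul_ite]

end SqrtLift

section Model

/-- The parameters of the problem; the two formulas for the payoff `h_r` meet at `f₀ + c`. -/
structure ModelParameters where
  α : ℝ
  δ : ℝ
  lam : ℝ
  f₀ : ℝ
  α_pos : 0 < α
  lam_pos : 0 < lam
  lam_lt : lam < α * δ
  f₀_eq : f₀ = 1 / √(2 * α) * (√((α * δ + lam) / (α * δ - lam)) - 1)
  lt_f₀ : α / (2 * lam) < f₀

namespace ModelParameters

variable (P : ModelParameters) (c : ℝ)

/-- The constant `s = √(2 α)`. -/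
noncomputable def rate : ℝ := √(2 * P.α)

/-- The constant `α δ - λ`. -/
noncomputable def gap : ℝ := P.α * P.δ - P.lam

/-- The payoff `h_l`. -/
noncomputable def leftPayoff (x : ℝ) : ℝ := (P.δ - P.lam / P.α) * x ^ 2 - P.lam / P.α ^ 2

/-- The payoff `h_{r1}`, valid up to `f₀ + c`. -/
noncomputable def nearPayoff (x : ℝ) : ℝ :=
  P.δ * c * (c - 2 * x) + (P.δ - P.lam / P.α) * x ^ 2 + c - P.lam / P.α ^ 2

/-- The constant `B₀` in `h_{r2}`. -/
noncomputable def tailCoeff : ℝ :=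
  -(2 * P.f₀ / (P.α * P.rate)) * (P.α * P.δ - P.lam) * exp (P.f₀ * P.rate)

/-- The payoff `h_{r2}`, valid from `f₀ + c` on. -/
noncomputable def farPayoff (x : ℝ) : ℝ :=
  P.lam / P.α * c * (c - 2 * x) + c + P.tailCoeff * exp (-(x - c) * P.rate)

/-- The payoff `h_r`. -/
noncomputable def rightPayoff : ℝ → ℝ := glue (P.f₀ + c) (P.nearPayoff c) (P.farPayoff c)

/-- The obstacle `H_l`. -/
noncomputable def leftObstacle : ℝ → ℝ := sqrtLift P.rate P.leftPayoff

/-- The obstacle `H_r`. -/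
noncomputable def rightObstacle : ℝ → ℝ := sqrtLift P.rate (P.rightPayoff c)

/-- The quadratic polynomial whose root in `(-∞, f₀ + c)` is `x_v`. -/
noncomputable def rightCurvature (x : ℝ) : ℝ :=
  P.δ - P.gap * x ^ 2 + c * P.α * (P.δ * (2 * x - c) - 1)

/-- The point `x_c` where `h_l` and `h_r` cross. -/
noncomputable def crossing : ℝ := 1 / (2 * P.δ) + c / 2

/-- The positive point at which `H_l` turns from convex to concave. -/
noncomputable def inflection : ℝ := √(P.δ / P.gap)

variable {c} {x v : ℝ}

section Constants

theorem rate_pos : 0 < P.rate := sqrt_pos.2 (by linarith [P.α_pos])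

theorem rate_sq : P.rate ^ 2 = 2 * P.α := sq_sqrt (by linarith [P.α_pos])

theorem gap_pos : 0 < P.gap := sub_pos.2 P.lam_lt

theorem δ_pos : 0 < P.δ := pos_of_mul_pos_right (P.lam_pos.trans P.lam_lt) P.α_pos.le

theorem f₀_pos : 0 < P.f₀ := (div_pos P.α_pos (by linarith [P.lam_pos])).trans P.lt_f₀

theorem sub_div_eq_gap_div : P.δ - P.lam / P.α = P.gap / P.α := by
  have := P.α_pos
  rw [gap]
  field_simp

theorem α_lt_two_mul_lam_mul_f₀ : P.α < 2 * P.lam * P.f₀ :=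
  (div_lt_iff₀' (by linarith [P.lam_pos])).1 P.lt_f₀

theorem gap_mul_quadratic_f₀ : P.gap * (P.α * P.f₀ ^ 2 + P.rate * P.f₀) = P.lam := by
  have := P.gap_pos
  have := P.rate_pos
  have hroot : P.rate * P.f₀ + 1 = √((P.α * P.δ + P.lam) / P.gap) := by
    rw [P.f₀_eq, ← rate, ← gap]
    field_simp
    ring
  have hsq : P.gap * (P.rate * P.f₀ + 1) ^ 2 = P.α * P.δ + P.lam := by
    have : 0 < P.α * P.δ + P.lam := by linarith [P.lam_pos, P.lam_lt]
    rw [hroot, sq_sqrt (by positivity)]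
    field_simp
  have hgap : P.gap = P.α * P.δ - P.lam := rfl
  linear_combination hsq / 2 - hgap / 2 - P.gap * P.f₀ ^ 2 / 2 * P.rate_sq

theorem f₀_sq_add : P.f₀ ^ 2 + 2 * P.f₀ / P.rate = P.lam / (P.α * P.gap) := by
  have := P.gap_pos
  have := P.rate_pos
  have := P.α_pos
  have hinv : 2 * P.f₀ / P.rate = P.rate * P.f₀ / P.α := by
    field_simp
    linear_combination -P.f₀ * P.rate_sq
  rw [hinv, ← P.gap_mul_quadratic_f₀]
  field_simp

theorem gap_mul_f₀_sq_lt_δ : P.gap * P.f₀ ^ 2 < P.δ := by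
  have : 0 < P.gap * (P.rate * P.f₀) := mul_pos P.gap_pos (mul_pos P.rate_pos P.f₀_pos)
  exact lt_of_mul_lt_mul_left (by linarith [P.gap_mul_quadratic_f₀, P.lam_lt]) P.α_pos.le

theorem one_lt_two_mul_δ_mul_f₀ : 1 < 2 * P.δ * P.f₀ :=
  lt_of_mul_lt_mul_left
    (by linarith [P.α_lt_two_mul_lam_mul_f₀, mul_lt_mul_of_pos_right P.lam_lt P.f₀_pos]) P.α_pos.le

theorem crossing_le (hc : 0 < c) : P.crossing c ≤ P.f₀ + c := by
  have : 1 / (2 * P.δ) < P.f₀ :=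
    (div_lt_iff₀' (by linarith [P.δ_pos])).2 P.one_lt_two_mul_δ_mul_f₀
  rw [crossing]
  linarith

theorem gap_mul_inflection_sq : P.gap * P.inflection ^ 2 = P.δ := by
  have := P.gap_pos
  rw [inflection, sq_sqrt (div_pos P.δ_pos P.gap_pos).le]
  field_simp

end Constants

section Payoffs

theorem hasLiftCurvature_leftPayoff :
    HasLiftCurvature P.rate P.leftPayoff fun x => 2 * (P.δ - P.gap * x ^ 2) := by
  have := P.α_pos
  refine ⟨fun x => 2 * (P.gap / P.α) * x, fun x => ?_, fun x => ?_⟩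
  · refine (((hasDerivAt_pow 2 x).const_mul _).sub_const _).congr_deriv ?_
    rw [P.sub_div_eq_gap_div]
    push_cast
    ring
  · refine (hasDerivAt_const_mul _).congr_deriv ?_
    simp only [P.rate_sq, leftPayoff, gap]
    field_simp
    ring

theorem hasDerivAt_nearPayoff :
    HasDerivAt (P.nearPayoff c) (2 * (P.gap / P.α) * x - 2 * P.δ * c) x := by
  refine ((((((hasDerivAt_const_mul 2).const_sub c).const_mul (P.δ * c)).add
    ((hasDerivAt_pow 2 x).const_mul _)).add_const c).sub_const _).congr_deriv ?_
  rw [P.sub_div_eq_gap_div]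
  push_cast
  ring

theorem hasLiftCurvature_nearPayoff (c : ℝ) :
    HasLiftCurvature P.rate (P.nearPayoff c) fun x => 2 * P.rightCurvature c x := by
  have := P.α_pos
  refine ⟨_, fun x => P.hasDerivAt_nearPayoff, fun x => ?_⟩
  refine ((hasDerivAt_const_mul _).sub_const _).congr_deriv ?_
  simp only [P.rate_sq, nearPayoff, rightCurvature, gap]
  field_simp
  ring

theorem hasDerivAt_exp_tail :
    HasDerivAt (fun x => exp (-(x - c) * P.rate)) (-P.rate * exp (-(x - c) * P.rate)) x :=
  (((((hasDerivAt_id x).sub_const c).neg).mul_const P.rate).exp).congr_deriv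
    (by simp only [Pi.neg_apply, id_eq]; ring)

theorem hasDerivAt_farPayoff : HasDerivAt (P.farPayoff c)
    (-(2 * P.lam / P.α * c) - P.rate * P.tailCoeff * exp (-(x - c) * P.rate)) x := by
  refine (((((hasDerivAt_const_mul 2).const_sub c).const_mul (P.lam / P.α * c)).add_const c).add
    (P.hasDerivAt_exp_tail.const_mul P.tailCoeff)).congr_deriv ?_
  ring

theorem hasLiftCurvature_farPayoff (c : ℝ) : HasLiftCurvature P.rate (P.farPayoff c)
    fun x => 2 * c * (P.lam * (2 * x - c) - P.α) := by
  have := P.α_pos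
  refine ⟨_, fun x => P.hasDerivAt_farPayoff, fun x => ?_⟩
  have haffine : 2 * P.α * (P.lam / P.α * c * (c - 2 * x) + c) =
      -(2 * c * (P.lam * (2 * x - c) - P.α)) := by
    field_simp
    ring
  refine ((P.hasDerivAt_exp_tail.const_mul _).const_sub _).congr_deriv ?_
  rw [farPayoff]
  linear_combination -(P.lam / P.α * c * (c - 2 * x) + c) * P.rate_sq - haffine

theorem tailCoeff_mul_exp : P.tailCoeff * exp (-(x - c) * P.rate) =
    -(2 * P.f₀ / (P.α * P.rate) * P.gap * exp (-(P.rate * (x - (P.f₀ + c))))) := by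
  rw [tailCoeff, ← gap, mul_assoc, ← exp_add,
    show P.f₀ * P.rate + -(x - c) * P.rate = -(P.rate * (x - (P.f₀ + c))) by ring]
  ring

theorem nearPayoff_sub_farPayoff : P.nearPayoff c x - P.farPayoff c x =
    P.gap / P.α * ((x - c) ^ 2 - P.lam / (P.α * P.gap) +
      2 * P.f₀ / P.rate * exp (-(P.rate * (x - (P.f₀ + c))))) := by
  have := P.α_pos
  have := P.gap_pos
  have := P.rate_pos
  have hδ : P.δ = P.gap / P.α + P.lam / P.α := by linarith [P.sub_div_eq_gap_div]
  rw [nearPayoff, farPayoff, tailCoeff_mul_exp, hδ]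
  field_simp
  ring

theorem firstOrderContact_payoffs (c : ℝ) :
    FirstOrderContact (P.nearPayoff c) (P.farPayoff c) (P.f₀ + c)
      (2 * (P.gap / P.α) * (P.f₀ + c) - 2 * P.δ * c) := by
  have := P.α_pos
  have := P.rate_pos
  refine ⟨sub_eq_zero.1 ?_, P.hasDerivAt_nearPayoff, P.hasDerivAt_farPayoff.congr_deriv ?_⟩
  · rw [P.nearPayoff_sub_farPayoff, ← P.f₀_sq_add]
    simp
  · rw [mul_assoc P.rate, tailCoeff_mul_exp, gap]
    simp only [sub_self, mul_zero, neg_zero, exp_zero]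
    field_simp
    ring

theorem farPayoff_le_nearPayoff : P.farPayoff c x ≤ P.nearPayoff c x := by
  have := P.α_pos
  have := P.gap_pos
  have := P.f₀_pos
  have := P.rate_pos
  have hexp : 2 * P.f₀ / P.rate - 2 * P.f₀ * (x - (P.f₀ + c)) ≤
      2 * P.f₀ / P.rate * exp (-(P.rate * (x - (P.f₀ + c)))) :=
    calc _ = 2 * P.f₀ / P.rate * (-(P.rate * (x - (P.f₀ + c))) + 1) := by field_simp; ring
      _ ≤ _ := by gcongr; exact add_one_le_exp _
  have hnonneg : 0 ≤ (x - c) ^ 2 - P.lam / (P.α * P.gap) +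
      2 * P.f₀ / P.rate * exp (-(P.rate * (x - (P.f₀ + c)))) := by
    rw [← P.f₀_sq_add]
    linarith [sq_nonneg (x - (P.f₀ + c))]
  rw [← sub_nonneg, nearPayoff_sub_farPayoff]
  positivity

theorem nearPayoff_sub_leftPayoff :
    P.nearPayoff c x - P.leftPayoff x = 2 * P.δ * c * (P.crossing c - x) := by
  have := P.δ_pos
  rw [nearPayoff, leftPayoff, crossing]
  field_simp
  ring

theorem leftPayoff_le_rightPayoff (hc : 0 < c) (hx : x ≤ P.crossing c) :
    P.leftPayoff x ≤ P.rightPayoff c x := by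
  have := P.δ_pos
  have := sub_nonneg.2 hx
  rw [rightPayoff, glue_of_le (hx.trans (P.crossing_le hc)), ← sub_nonneg,
    nearPayoff_sub_leftPayoff]
  positivity

theorem rightPayoff_le_leftPayoff (hc : 0 < c) (hx : P.crossing c ≤ x) :
    P.rightPayoff c x ≤ P.leftPayoff x := by
  have hnear : P.nearPayoff c x ≤ P.leftPayoff x := by
    have := P.δ_pos
    rw [← sub_nonpos, nearPayoff_sub_leftPayoff]
    exact mul_nonpos_of_nonneg_of_nonpos (by positivity) (sub_nonpos.2 hx)
  rcases le_total x (P.f₀ + c) with hxm | hmx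
  · rwa [rightPayoff, glue_of_le hxm]
  · rw [rightPayoff, glue_of_ge (P.firstOrderContact_payoffs c).eq hmx]
    exact P.farPayoff_le_nearPayoff.trans hnear

theorem α_le_lam_mul (hc : 0 < c) (hx : P.f₀ + c ≤ x) : P.α ≤ P.lam * (2 * x - c) := by
  have : P.lam * (2 * P.f₀) ≤ P.lam * (2 * x - c) := by
    have := P.lam_pos
    gcongr
    linarith
  linarith [P.α_lt_two_mul_lam_mul_f₀]

theorem rightPayoff_nonpos (hc : 0 < c) (hx : P.f₀ + c ≤ x) : P.rightPayoff c x ≤ 0 := by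
  have := P.α_pos
  have := P.gap_pos
  have := P.f₀_pos
  have := P.rate_pos
  have hlinear : P.lam / P.α * c * (c - 2 * x) + c = -(c / P.α * (P.lam * (2 * x - c) - P.α)) := by
    field_simp
    ring
  have hcoeff : 0 ≤ c / P.α * (P.lam * (2 * x - c) - P.α) :=
    mul_nonneg (by positivity) (sub_nonneg.2 (P.α_le_lam_mul hc hx))
  rw [rightPayoff, glue_of_ge (P.firstOrderContact_payoffs c).eq hx, farPayoff, hlinear,
    tailCoeff_mul_exp]
  have : 0 ≤ 2 * P.f₀ / (P.α * P.rate) * P.gap * exp (-(P.rate * (x - (P.f₀ + c)))) := by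
    positivity
  linarith

end Payoffs

section Curvature

theorem concaveOn_rightCurvature (c : ℝ) : ConcaveOn ℝ univ (P.rightCurvature c) := by
  refine ((((even_two.convexOn_pow (𝕜 := ℝ)).smul P.gap_pos.le).neg).add
    (convexOn_mul_add (-(2 * c * P.α * P.δ)) (c * P.α * (P.δ * c + 1) - P.δ)
      convex_univ).neg).congr fun x _ => ?_
  simp only [rightCurvature, Pi.add_apply, Pi.neg_apply, smul_eq_mul]
  ring

theorem rightCurvature_pos (hc : 0 < c) : 0 < P.rightCurvature c (P.f₀ + c) :=
  calc 0 < (P.δ - P.gap * P.f₀ ^ 2) + c * (2 * P.lam * P.f₀ - P.α) + P.lam * c ^ 2 := by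
        have := sub_pos.2 P.gap_mul_f₀_sq_lt_δ
        have := sub_pos.2 P.α_lt_two_mul_lam_mul_f₀
        have := P.lam_pos
        positivity
    _ = P.rightCurvature c (P.f₀ + c) := by
        rw [rightCurvature, gap]
        ring

theorem rightCurvature_nonneg (hc : 0 < c) (hv : P.rightCurvature c v = 0)
    (hx : x ∈ Icc v (P.f₀ + c)) : 0 ≤ P.rightCurvature c x :=
  (le_min hv.ge (P.rightCurvature_pos hc).le).trans
    ((P.concaveOn_rightCurvature c).min_le_of_mem_Icc (mem_univ _) (mem_univ _) hx)

theorem rightCurvature_nonpos (hc : 0 < c) (hvm : v < P.f₀ + c) (hv : P.rightCurvature c v = 0)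
    (hx : x ≤ v) : P.rightCurvature c x ≤ 0 := by
  have := (P.concaveOn_rightCurvature c).min_le_of_mem_Icc (mem_univ _) (mem_univ _)
    (⟨hx, hvm.le⟩ : v ∈ Icc x (P.f₀ + c))
  rw [hv, min_le_iff] at this
  exact this.resolve_right (P.rightCurvature_pos hc).not_ge

end Curvature

section Obstacles

theorem leftObstacle_eq (y : ℝ) : P.leftObstacle y =
    √y * (-(P.lam / P.α ^ 2) + ((P.δ - P.lam / P.α) / (8 * P.α)) * log y ^ 2) := by
  have := P.α_pos
  rw [leftObstacle, sqrtLift, leftPayoff, logCoord, div_pow, mul_pow, P.rate_sq]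
  field_simp
  ring

theorem rightObstacle_eqOn_glue : EqOn (P.rightObstacle c)
    (glue (expCoord P.rate (P.f₀ + c)) (sqrtLift P.rate (P.nearPayoff c))
      (sqrtLift P.rate (P.farPayoff c))) (Ioi 0) :=
  fun _ hy => sqrtLift_glue P.rate_pos hy

theorem contDiffOn_leftObstacle : ContDiffOn ℝ 1 P.leftObstacle (Ioi 0) :=
  contDiffOn_sqrtLift (by unfold leftPayoff; fun_prop)

theorem contDiffOn_rightObstacle : ContDiffOn ℝ 1 (P.rightObstacle c) (Ioi 0) :=
  (((P.firstOrderContact_payoffs c).sqrtLift P.rate_pos).contDiffOn_glue isOpen_Ioi expCoord_pos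
    (contDiffOn_sqrtLift (by unfold nearPayoff; fun_prop))
    (contDiffOn_sqrtLift (by unfold farPayoff; fun_prop))).congr P.rightObstacle_eqOn_glue

theorem convexOn_leftObstacle :
    ConvexOn ℝ (Icc 1 (expCoord P.rate P.inflection)) P.leftObstacle := by
  refine P.hasLiftCurvature_leftPayoff.convexOn_sqrtLift P.rate_pos (convex_Icc _ _)
    (fun y hy => one_pos.trans_le hy.1) fun y hy => ?_
  have hy' := interior_subset hy
  have hy₀ : 0 < y := one_pos.trans_le hy'.1
  have hle : logCoord P.rate y ≤ P.inflection := (logCoord_le_iff P.rate_pos hy₀).2 hy'.2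
  have hnonneg : 0 ≤ logCoord P.rate y :=
    (le_logCoord_iff P.rate_pos hy₀).2 (expCoord_zero.trans_le hy'.1)
  have : P.gap * logCoord P.rate y ^ 2 ≤ P.gap * P.inflection ^ 2 := by
    have := P.gap_pos
    gcongr
  linarith [P.gap_mul_inflection_sq]

theorem strictConcaveOn_leftObstacle :
    StrictConcaveOn ℝ (Ici (expCoord P.rate P.inflection)) P.leftObstacle := by
  refine P.hasLiftCurvature_leftPayoff.strictConcaveOn_sqrtLift P.rate_pos (convex_Ici _)
    (fun y hy => expCoord_pos.trans_le hy) fun y hy => ?_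
  rw [interior_Ici] at hy
  have hlt : P.inflection < logCoord P.rate y :=
    (lt_logCoord_iff P.rate_pos (expCoord_pos.trans hy)).2 hy
  have : P.gap * P.inflection ^ 2 < P.gap * logCoord P.rate y ^ 2 := by
    have := P.gap_pos
    have : 0 ≤ P.inflection := sqrt_nonneg _
    gcongr
  linarith [P.gap_mul_inflection_sq]

theorem concaveOn_rightObstacle (hc : 0 < c) (hvm : v < P.f₀ + c)
    (hv : P.rightCurvature c v = 0) :
    ConcaveOn ℝ (Ioc 0 (expCoord P.rate v)) (P.rightObstacle c) := by
  have hle {y : ℝ} (hy : y ∈ Ioc 0 (expCoord P.rate v)) : logCoord P.rate y ≤ v :=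
    (logCoord_le_iff P.rate_pos hy.1).2 hy.2
  refine ((P.hasLiftCurvature_nearPayoff c).concaveOn_sqrtLift P.rate_pos (convex_Ioc _ _)
    Ioc_subset_Ioi_self fun y hy => ?_).congr fun y hy => ?_
  · linarith [P.rightCurvature_nonpos hc hvm hv (hle (interior_subset hy))]
  · rw [rightObstacle, sqrtLift, sqrtLift, rightPayoff, glue_of_le ((hle hy).trans hvm.le)]

theorem convexOn_rightObstacle (hc : 0 < c) (hvm : v < P.f₀ + c)
    (hv : P.rightCurvature c v = 0) :
    ConvexOn ℝ (Ici (expCoord P.rate v)) (P.rightObstacle c) := by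
  have hpos {y : ℝ} (hy : y ∈ Ici (expCoord P.rate v)) : 0 < y := expCoord_pos.trans_le hy
  have hS : Convex ℝ (Ici (expCoord P.rate v)) := convex_Ici _
  have hvm' : expCoord P.rate (P.f₀ + c) ∈ Ici (expCoord P.rate v) :=
    (le_logCoord_iff P.rate_pos expCoord_pos).1 ((logCoord_expCoord P.rate_pos).symm ▸ hvm.le)
  refine (((P.firstOrderContact_payoffs c).sqrtLift P.rate_pos).convexOn_glue hS hvm' ?_ ?_).congr
      fun y hy => (P.rightObstacle_eqOn_glue (hpos hy)).symm
  · refine (P.hasLiftCurvature_nearPayoff c).convexOn_sqrtLift P.rate_pos (hS.inter (convex_Iic _))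
      (fun y hy => hpos hy.1) fun y hy => ?_
    obtain ⟨hvy, hym⟩ := interior_subset hy
    linarith [P.rightCurvature_nonneg hc hv ⟨(le_logCoord_iff P.rate_pos (hpos hvy)).2 hvy,
      (logCoord_le_iff P.rate_pos (hpos hvy)).2 hym⟩]
  · refine (P.hasLiftCurvature_farPayoff c).convexOn_sqrtLift P.rate_pos (hS.inter (convex_Ici _))
      (fun y hy => hpos hy.1) fun y hy => ?_
    obtain ⟨hvy, hmy⟩ := interior_subset hy
    have := P.α_le_lam_mul hc ((le_logCoord_iff P.rate_pos (hpos hvy)).2 hmy)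
    exact mul_nonneg (by positivity) (sub_nonneg.2 this)

theorem convexConcaveCrossing (hc : 0 < c) (hvm : v < P.f₀ + c) (hv : P.rightCurvature c v = 0) :
    ConvexConcaveCrossing P.leftObstacle (P.rightObstacle c) 1 (expCoord P.rate P.inflection)
      (expCoord P.rate (P.crossing c)) (expCoord P.rate v) where
  le_inflection := one_le_exp (mul_nonneg (by linarith [P.rate_pos]) (sqrt_nonneg _))
  convexOn_left := P.convexOn_leftObstacle
  strictConcaveOn_left := P.strictConcaveOn_leftObstacle
  concaveOn_right := (P.concaveOn_rightObstacle hc hvm hv).subset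
    (fun _ hy => ⟨expCoord_pos.trans_le hy.1, hy.2⟩) (convex_Icc _ _)
  convexOn_right := P.convexOn_rightObstacle hc hvm hv
  left_le_right y hy := mul_le_mul_of_nonneg_left (P.leftPayoff_le_rightPayoff hc
    ((logCoord_le_iff P.rate_pos (one_pos.trans_le hy.1)).2 hy.2)) (sqrt_nonneg y)
  right_le_left y hy := mul_le_mul_of_nonneg_left (P.rightPayoff_le_leftPayoff hc
    ((le_logCoord_iff P.rate_pos (expCoord_pos.trans_le hy)).2 hy)) (sqrt_nonneg y)

theorem isCommonTangent_of_eqOn {Hl Hr : ℝ → ℝ} {y₁ y₂ : ℝ} (hHl : EqOn Hl P.leftObstacle (Ioi 0))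
    (hHr : EqOn Hr (P.rightObstacle c) (Ioi 0)) (hy₁ : 0 < y₁) (hy₂ : 0 < y₂)
    (hsys : TangencySystem Hl Hr y₁ y₂) :
    IsCommonTangent P.leftObstacle (P.rightObstacle c) (deriv Hl y₁) (Hl y₁ - deriv Hl y₁ * y₁)
      y₁ y₂ := by
  have hleft : Hl =ᶠ[𝓝 y₁] P.leftObstacle := hHl.eventuallyEq_of_mem (Ioi_mem_nhds hy₁)
  have hright : Hr =ᶠ[𝓝 y₂] P.rightObstacle c := hHr.eventuallyEq_of_mem (Ioi_mem_nhds hy₂)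
  rw [hleft.deriv_eq, hleft.eq_of_nhds]
  exact (hsys.congr hleft hright).isCommonTangent
    ((P.contDiffOn_leftObstacle.differentiableOn one_ne_zero).differentiableAt (Ioi_mem_nhds hy₁))
    ((P.contDiffOn_rightObstacle.differentiableOn one_ne_zero).differentiableAt (Ioi_mem_nhds hy₂))

theorem leftObstacle_one_nonpos : P.leftObstacle 1 ≤ 0 := by
  have := P.lam_pos
  simp only [leftObstacle_eq, sqrt_one, log_one, zero_pow two_ne_zero, mul_zero, add_zero, one_mul,
    neg_nonpos]
  positivity

theorem eventually_rightObstacle_nonpos (hc : 0 < c) : ∀ᶠ y in atTop, P.rightObstacle c y ≤ 0 := by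
  filter_upwards [eventually_ge_atTop (expCoord P.rate (P.f₀ + c))] with y hy
  exact mul_nonpos_of_nonneg_of_nonpos (sqrt_nonneg y) (P.rightPayoff_nonpos hc
    ((le_logCoord_iff P.rate_pos (expCoord_pos.trans_le hy)).2 hy))

end Obstacles

end ModelParameters

end Model

theorem stmt_9_general (P : ModelParameters) {c v y₁ y₂ A B : ℝ} {Hl Hr H W : ℝ → ℝ} (hc : 0 < c)
    (hHl : EqOn Hl P.leftObstacle (Ioi 0)) (hHr : EqOn Hr (P.rightObstacle c) (Ioi 0))
    (hH : ∀ y, 0 < y → H y = min (Hl y) (Hr y))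
    (hvm : v < P.f₀ + c) (hv : P.rightCurvature c v = 0)
    (hy₁ : 1 < y₁) (hy₁c : y₁ < expCoord P.rate (P.crossing c))
    (hy₂ : max (expCoord P.rate (P.crossing c)) (expCoord P.rate v) < y₂)
    (hsys : TangencySystem Hl Hr y₁ y₂)
    (hA : A = deriv Hl y₁) (hB : B = Hl y₁ - deriv Hl y₁ * y₁)
    (hWl : ∀ y, 1 ≤ y → y ≤ y₁ → W y = Hl y)
    (hWm : ∀ y, y₁ < y → y < y₂ → W y = A * y + B)
    (hWr : ∀ y, y₂ ≤ y → W y = Hr y) :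
    ContDiffOn ℝ 1 W (Ici 1) ∧ ConvexOn ℝ (Ici 1) W ∧ (∀ y ∈ Ici (1 : ℝ), W y ≤ 0) ∧
    (∀ y ∈ Ici (1 : ℝ), W y ≤ H y) ∧
    (∀ g : ℝ → ℝ, ConvexOn ℝ (Ici 1) g → (∀ y ∈ Ici (1 : ℝ), g y ≤ H y) →
      ∀ y ∈ Ici (1 : ℝ), g y ≤ W y) ∧
    (∀ y, 1 < y → A * y + B ≤ H y) := by
  obtain ⟨hcy₂, hvy₂⟩ := max_lt_iff.1 hy₂
  have hlt : y₁ < y₂ := hy₁c.trans hcy₂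
  have hy₁₀ : 0 < y₁ := one_pos.trans hy₁
  have hy₂₀ : 0 < y₂ := hy₁₀.trans hlt
  have hpos {y : ℝ} (hy : y ∈ Ici 1) : 0 < y := one_pos.trans_le hy
  have hmin : ∀ y, 1 ≤ y → H y = min (P.leftObstacle y) (P.rightObstacle c y) := fun y hy => by
    rw [hH y (hpos hy), hHl (hpos hy), hHr (hpos hy)]
  have hfg := P.convexConcaveCrossing hc hvm hv
  have htan : IsCommonTangent P.leftObstacle (P.rightObstacle c) A B y₁ y₂ := by
    rw [hA, hB]
    exact P.isCommonTangent_of_eqOn hHl hHr hy₁₀ hy₂₀ hsys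
  have hW : EqOn W (commonTangentPatch P.leftObstacle (P.rightObstacle c) A B y₁ y₂) (Ici 1) :=
    htan.eqOn_patch (fun y hy h => (hWl y hy h).trans (hHl (hpos hy))) (fun y _ => hWm y)
      fun y hy h => (hWr y h).trans (hHr (hpos hy))
  have hconvex : ConvexOn ℝ (Ici 1) W :=
    (htan.convexOn_patch hfg hy₁.le hy₁c hcy₂ hvy₂.le).congr hW.symm
  refine ⟨?_, hconvex, fun y hy => ?_, fun y hy => ?_, fun g hg hgH y hy => ?_, fun y hy => ?_⟩
  · exact ((htan.contDiffOn_patch isOpen_Ioi P.contDiffOn_leftObstacle P.contDiffOn_rightObstacle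
      hy₁₀ hy₂₀ hlt).mono fun y hy => hpos hy).congr hW
  · refine le_of_convexOn_Ici_of_frequently_le hconvex ?_ (Eventually.frequently ?_) hy
    · rw [hWl 1 le_rfl hy₁.le, hHl (hpos self_mem_Ici)]
      exact P.leftObstacle_one_nonpos
    · filter_upwards [P.eventually_rightObstacle_nonpos hc, eventually_ge_atTop y₂] with z hz hyz
      rwa [hWr z hyz, hHr (hy₂₀.trans_le hyz)]
  · rw [hW hy, hmin y hy]
    exact htan.patch_le_min hfg hy₁.le hy₁c hcy₂ hvy₂.le hy
  · rw [hW hy]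
    exact htan.le_patch hy₁.le hlt hg (fun z hz => (hgH z hz).trans_eq (hmin z hz)) hy
  · rw [hmin y hy.le]
    exact htan.le_min hfg hy₁.le hy₁c hvy₂.le hy.le

/-- W(·;c) is the greatest nonpositive convex minorant of H(·;c) on [1,∞),
is C¹, and the common tangent lies below H(·;c) on (1,∞). -/
theorem stmt_9 (α δ lam : ℝ) (hα : 0 < α) (hδ : 0 < δ) (hlam : 0 < lam)
    (hltd : lam < α * δ)
    (f₀ : ℝ)
    (hf₀ : f₀ = (1 / Real.sqrt (2 * α)) * (Real.sqrt ((α * δ + lam) / (α * δ - lam)) - 1))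
    (hf₀big : α / (2 * lam) < f₀)
    (Ψ : ℝ → ℝ) (hΨ : ∀ x, Ψ x = Real.exp (2 * Real.sqrt (2 * α) * x))
    (Hl : ℝ → ℝ)
    (hHl : ∀ y, 0 < y → Hl y = Real.sqrt y *
      (-(lam / α ^ 2) + ((δ - lam / α) / (8 * α)) * (Real.log y) ^ 2))
    (B₀ : ℝ)
    (hB₀ : B₀ = -(2 * f₀ / (α * Real.sqrt (2 * α))) * (α * δ - lam) *
      Real.exp (f₀ * Real.sqrt (2 * α)))
    (hr1 hr2 hr Hr H : ℝ → ℝ → ℝ)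
    (hhr1 : ∀ c x, hr1 c x = δ * c * (c - 2 * x) + (δ - lam / α) * x ^ 2 + c - lam / α ^ 2)
    (hhr2 : ∀ c x, hr2 c x = (lam / α) * c * (c - 2 * x) + c +
      B₀ * Real.exp (-(x - c) * Real.sqrt (2 * α)))
    (hhra : ∀ c x, x ≤ f₀ + c → hr c x = hr1 c x)
    (hhrb : ∀ c x, f₀ + c ≤ x → hr c x = hr2 c x)
    (hHr : ∀ c y, 0 < y → Hr c y = Real.sqrt y * hr c (Real.log y / (2 * Real.sqrt (2 * α))))
    (hH : ∀ c y, 0 < y → H c y = min (Hl y) (Hr c y))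
    (xv : ℝ → ℝ)
    (hxv : ∀ c, 0 < c →
      (xv c < f₀ + c ∧
        δ - (α * δ - lam) * (xv c) ^ 2 + c * α * (δ * (2 * xv c - c) - 1) = 0 ∧
        ∀ x, x < f₀ + c →
          δ - (α * δ - lam) * x ^ 2 + c * α * (δ * (2 * x - c) - 1) = 0 → x = xv c))
    -- c₁ as in the existence result:
    (c₁ : ℝ) (hc₁pos : 0 < c₁)
    (hc₁ : ∀ c, 0 < c → c < c₁ → ∃! p : ℝ × ℝ,
      1 < p.1 ∧ p.1 < Ψ (1 / (2 * δ) + c / 2) ∧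
      Ψ (1 / (2 * δ) + c / 2) ≤ max (Ψ (1 / (2 * δ) + c / 2)) (Ψ (xv c)) ∧
      max (Ψ (1 / (2 * δ) + c / 2)) (Ψ (xv c)) < p.2 ∧
      TangencySystem Hl (Hr c) p.1 p.2)
    -- fix c ∈ (0,c₁) and the (unique) tangency pair (y₁,y₂):
    (c : ℝ) (hc : 0 < c) (hcc₁ : c < c₁)
    (y₁ y₂ : ℝ)
    (hy₁1 : 1 < y₁) (hy₁c : y₁ < Ψ (1 / (2 * δ) + c / 2))
    (hycv : Ψ (1 / (2 * δ) + c / 2) ≤ max (Ψ (1 / (2 * δ) + c / 2)) (Ψ (xv c)))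
    (hyv2 : max (Ψ (1 / (2 * δ) + c / 2)) (Ψ (xv c)) < y₂)
    (hsys : TangencySystem Hl (Hr c) y₁ y₂)
    -- A, B and W(·;c):
    (A B : ℝ) (hA : A = deriv Hl y₁) (hB : B = Hl y₁ - deriv Hl y₁ * y₁)
    (W : ℝ → ℝ)
    (hWl : ∀ y, 1 ≤ y → y ≤ y₁ → W y = Hl y)
    (hWm : ∀ y, y₁ < y → y < y₂ → W y = A * y + B)
    (hWr : ∀ y, y₂ ≤ y → W y = Hr c y) :
    ContDiffOn ℝ 1 W (Set.Ici 1) ∧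
    ConvexOn ℝ (Set.Ici 1) W ∧
    (∀ y ∈ Set.Ici (1 : ℝ), W y ≤ 0) ∧
    (∀ y ∈ Set.Ici (1 : ℝ), W y ≤ H c y) ∧
    (∀ g : ℝ → ℝ, ConvexOn ℝ (Set.Ici 1) g → (∀ y ∈ Set.Ici (1 : ℝ), g y ≤ 0) →
      (∀ y ∈ Set.Ici (1 : ℝ), g y ≤ H c y) → ∀ y ∈ Set.Ici (1 : ℝ), g y ≤ W y) ∧
    (∀ y, 1 < y → A * y + B ≤ H c y) := by
  let P : ModelParameters := ⟨α, δ, lam, f₀, hα, hlam, hltd, hf₀, hf₀big⟩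
  obtain rfl : Ψ = expCoord P.rate := funext hΨ
  obtain ⟨hvm, hv, -⟩ := hxv c hc
  have hr_eq : hr c = P.rightPayoff c :=
    eq_glue (fun x hx => (hhra c x hx).trans (hhr1 c x)) fun x hx => by
      rw [hhrb c x hx.le, hhr2, hB₀]
      rfl
  have hHl_eq : EqOn Hl P.leftObstacle (Ioi 0) := fun y hy =>
    (hHl y hy).trans (P.leftObstacle_eq y).symm
  have hHr_eq : EqOn (Hr c) (P.rightObstacle c) (Ioi 0) := fun y hy => by
    rw [hHr c y hy, hr_eq]
    rfl
  obtain ⟨hC1, hconvex, hnonpos, hle, hgreatest, hline⟩ := stmt_9_general P hc hHl_eq hHr_eq (hH c)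
    hvm hv hy₁1 hy₁c hyv2 hsys hA hB hWl hWm hWr
  exact ⟨hC1, hconvex, hnonpos, hle, fun g hg _ => hgreatest g hg, hline⟩
end

section
/- Let c₂>0 be such that for every c ∈ (0,c₂) there is a unique pair (ŷ₁(c),ŷ₂(c)) with 1 < ŷ₁(c) < y_c ≤ y_v(c) < ŷ₂(c) < ŷ₃(c) solving the tangency system. Then the functions c ↦ ŷ₁(c) and c ↦ ŷ₂(c) are continuously differentiable on (0,c₂), and, setting ŷ₁(0)=ŷ₂(0)=Ψ(1/(2δ)), they are continuous on [0,c₂). -/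
/-!
A tangent line to the graph of `H` is recorded by its slope and intercept, so a common tangent of
two graphs is a crossing of their dual curves. The dual curve has velocity `H'' y • (1, -y)`; hence
at a double tangency with distinct contact points and nonzero second derivatives the two dual curves
cross transversally, and the implicit function theorem makes the contact points smooth in the
parameter.

For the obstacles at hand, `H''` has the sign of a quadratic in `log y`. At the right contact point
this sign is positive by the constraint `y_v < y₂`. At the left one it is positive because the
common tangent passes strictly below `H_l` at `y₂`, which is impossible if `H_l` is concave on
`[y₁, y₂]`.

As `c → 0` every cluster point `(u, v)` of the pair satisfies `u ≤ Ψ(1/(2δ)) ≤ v ≤ Ψ(f₀)` and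
`H_l' u = H_l' v`; since `H_l'` is injective on `[1, Ψ(f₀)]`, both coordinates equal `Ψ(1/(2δ))`.
-/

open Set Filter Topology

/-! ### Implicit functions and cluster points -/

theorem contDiffAt_of_eventually_unique_solution {𝕜 E F G : Type*} [RCLike 𝕜]
    [NormedAddCommGroup E] [NormedSpace 𝕜 E] [CompleteSpace E]
    [NormedAddCommGroup F] [NormedSpace 𝕜 F] [CompleteSpace F]
    [NormedAddCommGroup G] [NormedSpace 𝕜 G] [CompleteSpace G]
    {n : WithTop ℕ∞} (hn : n ≠ 0) {f : E × F → G} {g : E → F} {a : E}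
    (hf : ContDiffAt 𝕜 n f (a, g a))
    (hinv : (fderiv 𝕜 f (a, g a) ∘L .inr 𝕜 E F).IsInvertible)
    (huniq : ∀ᶠ p in 𝓝 (a, g a), f p = f (a, g a) → p.2 = g p.1) :
    ContDiffAt 𝕜 n g a := by
  obtain ⟨ψ, hψ, hψa, hsol⟩ : ∃ ψ : E → F, ContDiffAt 𝕜 n ψ a ∧ ψ a = g a ∧
      ∀ᶠ x in 𝓝 a, f (x, ψ x) = f (a, g a) :=
    ⟨_, hf.contDiffAt_implicitFunction hn hinv, hf.implicitFunction_apply_self hn hinv,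
      hf.eventually_apply_implicitFunction hn hinv⟩
  have hgraph : Tendsto (fun x => (x, ψ x)) (𝓝 a) (𝓝 (a, g a)) :=
    tendsto_id.prodMk_nhds (hψa ▸ hψ.continuousAt.tendsto)
  refine hψ.congr_of_eventuallyEq ?_
  filter_upwards [hgraph.eventually huniq, hsol] with x hunique hx using (hunique hx).symm

theorem isInvertible_of_apply_eq_smul_sub_smul {L : ℝ × ℝ →L[ℝ] ℝ × ℝ} {A B : ℝ × ℝ}
    (hL : ∀ v, L v = v.1 • A - v.2 • B) (hdet : A.1 * B.2 - A.2 * B.1 ≠ 0) :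
    L.IsInvertible := by
  have hinj : Function.Injective (L : ℝ × ℝ →ₗ[ℝ] ℝ × ℝ) := by
    rw [← LinearMap.ker_eq_bot, LinearMap.ker_eq_bot']
    intro v hv
    obtain ⟨h₁, h₂⟩ : v.1 * A.1 - v.2 * B.1 = 0 ∧ v.1 * A.2 - v.2 * B.2 = 0 :=
      Prod.ext_iff.1 ((hL v).symm.trans hv)
    ext
    · exact (mul_eq_zero.1 (by linear_combination B.2 * h₁ - B.1 * h₂ :
        v.1 * (A.1 * B.2 - A.2 * B.1) = 0)).resolve_right hdet
    · exact (mul_eq_zero.1 (by linear_combination A.2 * h₁ - A.1 * h₂ :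
        v.2 * (A.1 * B.2 - A.2 * B.1) = 0)).resolve_right hdet
  exact ⟨(LinearEquiv.ofInjectiveEndo _ hinj).toContinuousLinearEquiv, by ext <;> simp⟩

theorem tendsto_of_injOn_of_squeezed {ι T Z : Type*} [TopologicalSpace T] [TopologicalSpace Z]
    [T2Space Z] {l : Filter ι} {τ : ι → T} {τ₀ : T} {f : T × ℝ → Z} {u v w r : ι → ℝ}
    {a w₀ r₀ : ℝ} (hτ : Tendsto τ l (𝓝 τ₀)) (hf : ∀ y ∈ Icc a r₀, ContinuousAt f (τ₀, y))
    (hinj : InjOn (fun y => f (τ₀, y)) (Icc a r₀))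
    (hw : Tendsto w l (𝓝 w₀)) (hr : Tendsto r l (𝓝 r₀))
    (hau : ∀ᶠ i in l, a ≤ u i) (huw : ∀ᶠ i in l, u i ≤ w i) (hwv : ∀ᶠ i in l, w i ≤ v i)
    (hvr : ∀ᶠ i in l, v i ≤ r i) (heq : ∀ᶠ i in l, f (τ₀, u i) = f (τ i, v i)) :
    Tendsto (fun i => (u i, v i)) l (𝓝 (w₀, w₀)) := by
  refine (tendsto_iff_ultrafilter _ _ _).2 fun g hg => ?_
  have hrg : ∀ᶠ i in g, r i ≤ r₀ + 1 := hg (hr.eventually_le_const (lt_add_one r₀))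
  have huK : ∀ᶠ i in g, u i ∈ Icc a (r₀ + 1) := by
    filter_upwards [hg hau, hg huw, hg hwv, hg hvr, hrg] with i h₁ h₂ h₃ h₄ h₅
    exact ⟨h₁, by linarith⟩
  have hvK : ∀ᶠ i in g, v i ∈ Icc a (r₀ + 1) := by
    filter_upwards [hg hau, hg huw, hg hwv, hg hvr, hrg] with i h₁ h₂ h₃ h₄ h₅
    exact ⟨by linarith, by linarith⟩
  obtain ⟨u₀, ⟨hau₀, -⟩, hu₀ : Tendsto u g (𝓝 u₀)⟩ :=
    isCompact_Icc.ultrafilter_le_nhds (g.map u) (le_principal_iff.2 huK)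
  obtain ⟨v₀, -, hv₀ : Tendsto v g (𝓝 v₀)⟩ :=
    isCompact_Icc.ultrafilter_le_nhds (g.map v) (le_principal_iff.2 hvK)
  have huw₀ : u₀ ≤ w₀ := le_of_tendsto_of_tendsto hu₀ (hw.mono_left hg) (hg huw)
  have hwv₀ : w₀ ≤ v₀ := le_of_tendsto_of_tendsto (hw.mono_left hg) hv₀ (hg hwv)
  have hvr₀ : v₀ ≤ r₀ := le_of_tendsto_of_tendsto hv₀ (hr.mono_left hg) (hg hvr)
  have hu₀I : u₀ ∈ Icc a r₀ := ⟨hau₀, by linarith⟩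
  have hv₀I : v₀ ∈ Icc a r₀ := ⟨by linarith, hvr₀⟩
  have hlim : f (τ₀, u₀) = f (τ₀, v₀) := tendsto_nhds_unique_of_eventuallyEq
    ((hf u₀ hu₀I).tendsto.comp (tendsto_const_nhds.prodMk_nhds hu₀))
    ((hf v₀ hv₀I).tendsto.comp ((hτ.mono_left hg).prodMk_nhds hv₀)) (hg heq)
  have huv : u₀ = v₀ := hinj hu₀I hv₀I hlim
  obtain rfl : u₀ = w₀ := le_antisymm huw₀ (huv ▸ hwv₀)
  exact hu₀.prodMk_nhds (huv ▸ hv₀)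

/-! ### Double tangencies -/

/-- The dual curve of the graph of `H`: slope and intercept of its tangent line at `y`. -/
noncomputable def dualCurve (H : ℝ → ℝ) (y : ℝ) : ℝ × ℝ :=
  (deriv H y, H y - deriv H y * y)

theorem tangencySystem_iff_dualCurve_eq {Hl Hr : ℝ → ℝ} {y₁ y₂ : ℝ} :
    TangencySystem Hl Hr y₁ y₂ ↔ dualCurve Hl y₁ = dualCurve Hr y₂ :=
  Prod.mk_inj.symm

theorem tangencySystem_congr {Hl Hr Kl Kr : ℝ → ℝ} {y₁ y₂ : ℝ} (hl : Hl =ᶠ[𝓝 y₁] Kl)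
    (hr : Hr =ᶠ[𝓝 y₂] Kr) : TangencySystem Hl Hr y₁ y₂ ↔ TangencySystem Kl Kr y₁ y₂ := by
  simp only [TangencySystem, hl.deriv_eq, hl.eq_of_nhds, hr.deriv_eq, hr.eq_of_nhds]

theorem TangencySystem.left_tangent_apply {Hl Hr : ℝ → ℝ} {y₁ y₂ : ℝ}
    (h : TangencySystem Hl Hr y₁ y₂) : Hl y₁ + deriv Hl y₁ * (y₂ - y₁) = Hr y₂ := by
  linear_combination h.2 + y₂ * h.1

theorem hasDerivAt_dualCurve {H : ℝ → ℝ} {H'' y : ℝ} (h : DifferentiableAt ℝ H y)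
    (h' : HasDerivAt (deriv H) H'' y) : HasDerivAt (dualCurve H) (H'' • (1, -y)) y := by
  refine (h'.prodMk (h.hasDerivAt.sub (h'.mul (hasDerivAt_id y)))).congr_deriv ?_
  ext <;> simp

theorem exists_deriv2_pos_of_tangent_lt {f : ℝ → ℝ} {a b : ℝ} (hab : a < b)
    (hf : DifferentiableOn ℝ f (Icc a b)) (hf' : DifferentiableOn ℝ (deriv f) (Icc a b))
    (h : f a + deriv f a * (b - a) < f b) : ∃ t ∈ Ioo a b, 0 < deriv (deriv f) t := by
  obtain ⟨ξ, hξ, hslope⟩ :=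
    exists_deriv_eq_slope f hab hf.continuousOn (hf.mono Ioo_subset_Icc_self)
  have hξb : Icc a ξ ⊆ Icc a b := Icc_subset_Icc_right hξ.2.le
  obtain ⟨t, ht, hslope'⟩ := exists_deriv_eq_slope (deriv f) hξ.1 (hf'.mono hξb).continuousOn
    (hf'.mono (Ioo_subset_Icc_self.trans hξb))
  refine ⟨t, ⟨ht.1, ht.2.trans hξ.2⟩, ?_⟩
  have hlt : deriv f a < deriv f ξ := by
    rw [hslope, lt_div_iff₀ (sub_pos.2 hab)]
    linarith
  rw [hslope']
  exact div_pos (sub_pos.2 hlt) (sub_pos.2 hξ.1)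

theorem isInvertible_fderiv_dualCurve_sub {E : Type*} [NormedAddCommGroup E] [NormedSpace ℝ E]
    {Hl : ℝ → ℝ} {Hr : E → ℝ → ℝ} {c : E} {y : ℝ × ℝ} {p q : ℝ}
    (hl : HasDerivAt (dualCurve Hl) (p • (1, -y.1)) y.1)
    (hr : HasDerivAt (dualCurve (Hr c)) (q • (1, -y.2)) y.2)
    (hdiff : DifferentiableAt ℝ
      (fun u : E × ℝ × ℝ => dualCurve Hl u.2.1 - dualCurve (Hr u.1) u.2.2) (c, y))
    (hp : p ≠ 0) (hq : q ≠ 0) (hy : y.1 ≠ y.2) :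
    (fderiv ℝ (fun u : E × ℝ × ℝ => dualCurve Hl u.2.1 - dualCurve (Hr u.1) u.2.2) (c, y) ∘L
      .inr ℝ E (ℝ × ℝ)).IsInvertible := by
  have hslice := (hl.hasFDerivAt.comp y hasFDerivAt_fst).sub
    (hr.hasFDerivAt.comp y hasFDerivAt_snd)
  have hpartial := hslice.unique (hdiff.hasFDerivAt.comp y (hasFDerivAt_prodMk_right c y))
  refine isInvertible_of_apply_eq_smul_sub_smul (A := p • (1, -y.1)) (B := q • (1, -y.2))
    (fun v => ?_) ?_
  · rw [← hpartial]
    simp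
  · have hdet : p * q * (y.1 - y.2) ≠ 0 := mul_ne_zero (mul_ne_zero hp hq) (sub_ne_zero.2 hy)
    convert hdet using 1
    simp only [Prod.smul_mk, smul_eq_mul]
    ring

theorem contDiffAt_of_eventually_unique_tangency {E : Type*} [NormedAddCommGroup E]
    [NormedSpace ℝ E] [CompleteSpace E] {n : WithTop ℕ∞} (hn : n ≠ 0) {Hl : ℝ → ℝ}
    {Hr : E → ℝ → ℝ} {Y : E → ℝ × ℝ} {c : E} {p q : ℝ}
    (hl : ContDiffAt ℝ n (dualCurve Hl) (Y c).1)
    (hr : ContDiffAt ℝ n (fun u : E × ℝ => dualCurve (Hr u.1) u.2) (c, (Y c).2))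
    (hl' : HasDerivAt (dualCurve Hl) (p • (1, -(Y c).1)) (Y c).1)
    (hr' : HasDerivAt (dualCurve (Hr c)) (q • (1, -(Y c).2)) (Y c).2)
    (hp : p ≠ 0) (hq : q ≠ 0) (hne : (Y c).1 ≠ (Y c).2)
    (htan : TangencySystem Hl (Hr c) (Y c).1 (Y c).2)
    (huniq : ∀ᶠ u in 𝓝 (c, Y c), TangencySystem Hl (Hr u.1) u.2.1 u.2.2 → u.2 = Y u.1) :
    ContDiffAt ℝ n Y c := by
  let f : E × ℝ × ℝ → ℝ × ℝ := fun u => dualCurve Hl u.2.1 - dualCurve (Hr u.1) u.2.2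
  have hf : ContDiffAt ℝ n f (c, Y c) :=
    (hl.comp (c, Y c) contDiffAt_snd.fst).sub
      (hr.comp (c, Y c) (contDiffAt_fst.prodMk contDiffAt_snd.snd))
  have hf₀ : f (c, Y c) = 0 := sub_eq_zero.2 (tangencySystem_iff_dualCurve_eq.1 htan)
  refine contDiffAt_of_eventually_unique_solution hn hf
    (isInvertible_fderiv_dualCurve_sub hl' hr' (hf.differentiableAt hn) hp hq hne) ?_
  filter_upwards [huniq] with u hu hfu
  exact hu (tangencySystem_iff_dualCurve_eq.2 (sub_eq_zero.1 (hfu.trans hf₀)))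

/-! ### Derivatives in logarithmic coordinates -/

theorem hasDerivAt_sqrt_mul_comp_log_div {k : ℝ → ℝ} {k' r y : ℝ} (hy : 0 < y)
    (hk : HasDerivAt k k' (Real.log y / r)) :
    HasDerivAt (fun y => √y * k (Real.log y / r)) ((k' / r + k (Real.log y / r) / 2) / √y) y := by
  refine ((Real.hasDerivAt_sqrt hy.ne').mul
    (hk.comp y ((Real.hasDerivAt_log hy.ne').div_const r))).congr_deriv ?_
  have hsqrt : √y ≠ 0 := (Real.sqrt_pos.2 hy).ne'
  have hsq : √y ^ 2 = y := Real.sq_sqrt hy.le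
  simp only [Function.comp_apply]
  field_simp
  rw [hsq]
  ring

theorem hasDerivAt_comp_log_div_div_sqrt {k : ℝ → ℝ} {k' r y : ℝ} (hy : 0 < y)
    (hk : HasDerivAt k k' (Real.log y / r)) :
    HasDerivAt (fun y => k (Real.log y / r) / √y)
      ((k' / r - k (Real.log y / r) / 2) / (y * √y)) y := by
  have hsqrt : √y ≠ 0 := (Real.sqrt_pos.2 hy).ne'
  refine ((hk.comp y ((Real.hasDerivAt_log hy.ne').div_const r)).div
    (Real.hasDerivAt_sqrt hy.ne') hsqrt).congr_deriv ?_
  have hsq : √y ^ 2 = y := Real.sq_sqrt hy.le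
  simp only [Function.comp_apply]
  field_simp
  rw [hsq]
  ring

/-! ### The obstacles -/

/-- The coordinate change `Ψ` between the state `x` and the variable `y` of the obstacles. -/
noncomputable def psi (α x : ℝ) : ℝ := Real.exp (2 * √(2 * α) * x)

/-- The inverse of `psi α` on `(0, ∞)`. -/
noncomputable def psiInv (α y : ℝ) : ℝ := Real.log y / (2 * √(2 * α))

/-- The quadratic `h_{r1}(x; c)`. At `c = 0` it is the polynomial that defines `H_l`. -/
noncomputable def innerReward (α δ lam c x : ℝ) : ℝ :=
  δ * c * (c - 2 * x) + (δ - lam / α) * x ^ 2 + c - lam / α ^ 2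

/-- The obstacle `√y · h_{r1}(Ψ⁻¹ y; c)`: it is `H_r(y; c)` on `(0, Ψ(f₀ + c))`, and `H_l` when
`c = 0`. -/
noncomputable def obstacle (α δ lam c y : ℝ) : ℝ :=
  √y * innerReward α δ lam c (psiInv α y)

/-- The quadratic in `x` of which `x_v(c)` is a root; at `x = Ψ⁻¹ y` it has the sign of the second
derivative of `obstacle α δ lam c` at `y`. -/
def inflectionPoly (α δ lam c x : ℝ) : ℝ :=
  δ - (α * δ - lam) * x ^ 2 + c * α * (δ * (2 * x - c) - 1)

section Coordinates

variable {α x y : ℝ}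

theorem psi_pos : 0 < psi α x := Real.exp_pos _

theorem continuous_psi : Continuous (psi α) := by
  unfold psi
  fun_prop

theorem continuousAt_psiInv (hy : 0 < y) : ContinuousAt (psiInv α) y :=
  (Real.continuousAt_log hy.ne').div_const _

theorem psi_lt_iff (hα : 0 < α) (hy : 0 < y) : psi α x < y ↔ x < psiInv α y := by
  rw [psi, psiInv, ← Real.lt_log_iff_exp_lt hy, lt_div_iff₀' (by positivity)]

theorem lt_psi_iff (hα : 0 < α) (hy : 0 < y) : y < psi α x ↔ psiInv α y < x := by
  rw [psi, psiInv, ← Real.log_lt_iff_lt_exp hy, div_lt_iff₀' (by positivity)]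

theorem psiInv_nonneg (hy : 1 ≤ y) : 0 ≤ psiInv α y :=
  div_nonneg (Real.log_nonneg hy) (by positivity)

end Coordinates

section Obstacle

variable {α δ lam c y : ℝ}

theorem hasDerivAt_innerReward (x : ℝ) :
    HasDerivAt (innerReward α δ lam c) (2 * (δ - lam / α) * x - 2 * δ * c) x := by
  have h := ((((hasDerivAt_id x).const_mul 2).const_sub c).const_mul (δ * c)).add
    (((hasDerivAt_id x).pow 2).const_mul (δ - lam / α))
  refine ((h.add_const c).sub_const (lam / α ^ 2)).congr_deriv ?_
  simp only [id]
  ring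

theorem hasDerivAt_obstacle (hy : 0 < y) :
    HasDerivAt (obstacle α δ lam c)
      (((2 * (δ - lam / α) * psiInv α y - 2 * δ * c) / (2 * √(2 * α)) +
        innerReward α δ lam c (psiInv α y) / 2) / √y) y :=
  hasDerivAt_sqrt_mul_comp_log_div hy (hasDerivAt_innerReward _)

theorem obstacle_zero_eq (hα : 0 < α) : obstacle α δ lam 0 y =
    √y * (-(lam / α ^ 2) + (δ - lam / α) / (8 * α) * Real.log y ^ 2) := by
  have hsq : psiInv α y ^ 2 = Real.log y ^ 2 / (8 * α) := by
    rw [psiInv, div_pow, mul_pow, Real.sq_sqrt (by positivity)]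
    ring
  rw [obstacle, innerReward, hsq]
  ring

theorem second_order_innerReward_eq (hα : 0 < α) (x : ℝ) :
    (2 * (δ - lam / α) / (2 * √(2 * α)) + (2 * (δ - lam / α) * x - 2 * δ * c) / 2) /
          (2 * √(2 * α)) -
        ((2 * (δ - lam / α) * x - 2 * δ * c) / (2 * √(2 * α)) + innerReward α δ lam c x / 2) / 2 =
      inflectionPoly α δ lam c x / (4 * α) := by
  have hsq : √(2 * α) ^ 2 = 2 * α := Real.sq_sqrt (by positivity)
  have hsqrt : √(2 * α) ≠ 0 := (Real.sqrt_pos.2 (by positivity)).ne'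
  have hcancel (a b r : ℝ) : (a / (2 * √(2 * α)) + b / 2) / (2 * √(2 * α)) -
      (b / (2 * √(2 * α)) + r / 2) / 2 = a / (4 * √(2 * α) ^ 2) - r / 4 := by
    field_simp
    ring
  rw [hcancel, hsq, inflectionPoly, innerReward]
  field_simp
  ring

theorem hasDerivAt_deriv_obstacle (hα : 0 < α) (hy : 0 < y) :
    HasDerivAt (deriv (obstacle α δ lam c))
      (inflectionPoly α δ lam c (psiInv α y) / (4 * α * (y * √y))) y := by
  have hk : HasDerivAt
      (fun x => (2 * (δ - lam / α) * x - 2 * δ * c) / (2 * √(2 * α)) + innerReward α δ lam c x / 2)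
      (2 * (δ - lam / α) / (2 * √(2 * α)) +
        (2 * (δ - lam / α) * psiInv α y - 2 * δ * c) / 2) (psiInv α y) := by
    have hlin := ((hasDerivAt_id (psiInv α y)).const_mul (2 * (δ - lam / α))).sub_const (2 * δ * c)
    exact ((hlin.div_const _).add ((hasDerivAt_innerReward _).div_const 2)).congr_deriv
      (by rw [mul_one])
  have hderiv : deriv (obstacle α δ lam c) =ᶠ[𝓝 y] _ :=
    (lt_mem_nhds hy).mono fun z hz => (hasDerivAt_obstacle hz).deriv
  refine ((hasDerivAt_comp_log_div_div_sqrt hy hk).congr_of_eventuallyEq hderiv).congr_deriv ?_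
  rw [← div_div (inflectionPoly _ _ _ _ _), ← second_order_innerReward_eq hα]
  rfl

theorem hasDerivAt_dualCurve_obstacle (hα : 0 < α) (hy : 0 < y) :
    HasDerivAt (dualCurve (obstacle α δ lam c))
      ((inflectionPoly α δ lam c (psiInv α y) / (4 * α * (y * √y))) • (1, -y)) y :=
  hasDerivAt_dualCurve (hasDerivAt_obstacle hy).differentiableAt (hasDerivAt_deriv_obstacle hα hy)

theorem contDiffAt_dualCurve_obstacle {n : WithTop ℕ∞} (hy : 0 < y) :
    ContDiffAt ℝ n (fun u : ℝ × ℝ => dualCurve (obstacle α δ lam u.1) u.2) (c, y) := by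
  have hlog : ContDiffAt ℝ n (fun u : ℝ × ℝ => Real.log u.2) (c, y) :=
    contDiffAt_snd.log hy.ne'
  have hsqrt : ContDiffAt ℝ n (fun u : ℝ × ℝ => √u.2) (c, y) := contDiffAt_snd.sqrt hy.ne'
  have hsqrt₀ : √y ≠ 0 := (Real.sqrt_pos.2 hy).ne'
  have hslope : ContDiffAt ℝ n (fun u : ℝ × ℝ => deriv (obstacle α δ lam u.1) u.2) (c, y) := by
    refine ContDiffAt.congr_of_eventuallyEq ?_
      ((continuousAt_snd.eventually (lt_mem_nhds hy)).mono
        fun u hu => (hasDerivAt_obstacle hu).deriv)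
    unfold innerReward psiInv
    fun_prop (disch := assumption)
  have hvalue : ContDiffAt ℝ n (fun u : ℝ × ℝ => obstacle α δ lam u.1 u.2) (c, y) := by
    unfold obstacle innerReward psiInv
    fun_prop
  exact hslope.prodMk (hvalue.sub (hslope.mul contDiffAt_snd))

theorem continuousAt_deriv_obstacle (hy : 0 < y) :
    ContinuousAt (fun u : ℝ × ℝ => deriv (obstacle α δ lam u.1) u.2) (c, y) :=
  (contDiffAt_dualCurve_obstacle (n := 0) hy).continuousAt.fst

theorem obstacle_lt_obstacle_zero (hδ : 0 < δ) (hc : 0 < c) (hy : 0 < y)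
    (hx : 1 / (2 * δ) + c / 2 < psiInv α y) : obstacle α δ lam c y < obstacle α δ lam 0 y := by
  refine mul_lt_mul_of_pos_left ?_ (Real.sqrt_pos.2 hy)
  have hgap : 1 + δ * (c - 2 * psiInv α y) < 0 := by
    have := mul_lt_mul_of_pos_left hx hδ
    have : δ * (1 / (2 * δ) + c / 2) = 1 / 2 + δ * c / 2 := by field_simp
    linarith
  have : c * (1 + δ * (c - 2 * psiInv α y)) < 0 := mul_neg_of_pos_of_neg hc hgap
  unfold innerReward
  linarith

end Obstacle

/-! ### The sign of the second derivative -/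

theorem pos_iff_root_lt_of_concaveOn {s : Set ℝ} {f : ℝ → ℝ} (hf : ConcaveOn ℝ s f) {r x b : ℝ}
    (hrs : r ∈ s) (hxs : x ∈ s) (hbs : b ∈ s) (hr : f r = 0) (hb : 0 < f b) (hrb : r < b)
    (hxb : x < b) : 0 < f x ↔ r < x := by
  constructor
  · intro hx
    by_contra! hxr
    have hxr : x < r := hxr.lt_of_ne fun h => by simp [h, hr] at hx
    have hslope := hf.slope_anti_adjacent hxs hbs hxr hrb
    rw [hr, sub_zero, zero_sub] at hslope
    exact (div_pos hb (sub_pos.2 hrb)).not_ge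
      (hslope.trans (div_nonpos_of_nonpos_of_nonneg (by linarith) (sub_pos.2 hxr).le))
  · intro hrx
    by_contra! hx
    have hslope := hf.slope_anti_adjacent hrs hbs hrx hxb
    rw [hr, sub_zero] at hslope
    exact (div_pos (by linarith : 0 < f b - f x) (sub_pos.2 hxb)).not_ge
      (hslope.trans (div_nonpos_of_nonpos_of_nonneg hx (sub_pos.2 hrx).le))

section Inflection

variable {α δ lam f₀ c : ℝ}

theorem concaveOn_inflectionPoly (hlt : lam < α * δ) :
    ConcaveOn ℝ univ (inflectionPoly α δ lam c) := by
  refine ⟨convex_univ, fun x _ y _ a b ha hb hab => ?_⟩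
  obtain rfl : b = 1 - a := by linarith
  have : 0 ≤ (α * δ - lam) * (a * (1 - a) * (x - y) ^ 2) :=
    mul_nonneg (by linarith) (by positivity)
  simp only [inflectionPoly, smul_eq_mul]
  linarith

theorem antitoneOn_inflectionPoly_zero (hlt : lam < α * δ) :
    AntitoneOn (inflectionPoly α δ lam 0) (Ici 0) := by
  intro x hx y _ hxy
  have : (α * δ - lam) * x ^ 2 ≤ (α * δ - lam) * y ^ 2 :=
    mul_le_mul_of_nonneg_left (pow_le_pow_left₀ hx hxy 2) (by linarith)
  simp only [inflectionPoly]
  linarith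

theorem mul_sq_lt_of_eq_sqrt_sub_one (hα : 0 < α) (hlam : 0 < lam) (hlt : lam < α * δ)
    (h : f₀ = 1 / √(2 * α) * (√((α * δ + lam) / (α * δ - lam)) - 1)) :
    (α * δ - lam) * f₀ ^ 2 < δ := by
  have hden : 0 < α * δ - lam := sub_pos.2 hlt
  have hratio : 0 < (α * δ + lam) / (α * δ - lam) := div_pos (by linarith) hden
  set W := √((α * δ + lam) / (α * δ - lam))
  have hW : 0 < W := Real.sqrt_pos.2 hratio
  have hWsq : W ^ 2 * (α * δ - lam) = α * δ + lam := by
    rw [Real.sq_sqrt hratio.le, div_mul_cancel₀ _ hden.ne']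
  have hf₀ : 2 * α * f₀ ^ 2 = (W - 1) ^ 2 := by
    rw [h, mul_pow, div_pow, Real.sq_sqrt (by positivity)]
    field_simp
  have hgap : 2 * α * (δ - (α * δ - lam) * f₀ ^ 2) = 2 * W * (α * δ - lam) := by
    linear_combination -(α * δ - lam) * hf₀ - hWsq
  have hpos : 0 < 2 * α * (δ - (α * δ - lam) * f₀ ^ 2) :=
    hgap ▸ mul_pos (mul_pos two_pos hW) hden
  exact sub_pos.1 (pos_of_mul_pos_right hpos (by positivity))

theorem inflectionPoly_add_self_pos (hlam : 0 < lam) (hf : (α * δ - lam) * f₀ ^ 2 < δ)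
    (hαf : α ≤ 2 * lam * f₀) (hc : 0 ≤ c) : 0 < inflectionPoly α δ lam c (f₀ + c) := by
  have hexpand : inflectionPoly α δ lam c (f₀ + c) =
      (δ - (α * δ - lam) * f₀ ^ 2) + c * (2 * lam * f₀ - α) + lam * c ^ 2 := by
    unfold inflectionPoly
    ring
  have : 0 ≤ c * (2 * lam * f₀ - α) := mul_nonneg hc (sub_nonneg.2 hαf)
  have : 0 ≤ lam * c ^ 2 := by positivity
  linarith

theorem injOn_deriv_obstacle_zero (hα : 0 < α) (hlt : lam < α * δ)
    (hf₀ : 0 ≤ f₀) (hf : (α * δ - lam) * f₀ ^ 2 < δ) :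
    InjOn (deriv (obstacle α δ lam 0)) (Icc 1 (psi α f₀)) := by
  refine (strictMonoOn_of_deriv_pos (convex_Icc _ _) (fun y hy =>
    (hasDerivAt_deriv_obstacle hα
      (one_pos.trans_le hy.1)).continuousAt.continuousWithinAt) fun y hy => ?_).injOn
  rw [interior_Icc] at hy
  have hy₀ : 0 < y := one_pos.trans hy.1
  rw [(hasDerivAt_deriv_obstacle hα hy₀).deriv]
  refine div_pos ?_ (by positivity)
  have hfpos : 0 < inflectionPoly α δ lam 0 f₀ := by simpa [inflectionPoly] using hf
  exact hfpos.trans_le (antitoneOn_inflectionPoly_zero hlt (psiInv_nonneg hy.1.le) hf₀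
    ((lt_psi_iff hα hy₀).1 hy.2).le)

end Inflection

/-! ### Regularity of the tangency pair -/

/-- The triples `(c, y₁, y₂)` with `1 < y₁ < y_c < y₂ < Ψ(f₀ + c)` and `y_v(c) < y₂`. The last
inequality is expressed by the sign of `inflectionPoly`, so that the condition is open in
`(c, y₁, y₂)` without any regularity of `x_v`. -/
def tangencyRegion (α δ lam f₀ : ℝ) : Set (ℝ × ℝ × ℝ) :=
  {u | 1 < u.2.1 ∧ u.2.1 < psi α (1 / (2 * δ) + u.1 / 2) ∧
    psi α (1 / (2 * δ) + u.1 / 2) < u.2.2 ∧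
    0 < inflectionPoly α δ lam u.1 (psiInv α u.2.2) ∧ u.2.2 < psi α (f₀ + u.1)}

/-- `y` solves the tangency system of the obstacles with parameters `0` and `c`, within
`tangencyRegion`. -/
def IsTangencyPair (α δ lam f₀ c : ℝ) (y : ℝ × ℝ) : Prop :=
  (c, y) ∈ tangencyRegion α δ lam f₀ ∧
    TangencySystem (obstacle α δ lam 0) (obstacle α δ lam c) y.1 y.2

section Regularity

variable {α δ lam f₀ c : ℝ}

theorem tangencyRegion_mem_nhds {u : ℝ × ℝ × ℝ} (hu : u ∈ tangencyRegion α δ lam f₀) :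
    tangencyRegion α δ lam f₀ ∈ 𝓝 u := by
  have hy₂ : 0 < u.2.2 := psi_pos.trans hu.2.2.1
  have hψ : Continuous (psi α) := continuous_psi
  have hfst : ContinuousAt (fun u : ℝ × ℝ × ℝ => u.2.1) u := by fun_prop
  have hsnd : ContinuousAt (fun u : ℝ × ℝ × ℝ => u.2.2) u := by fun_prop
  have hpsi : ContinuousAt (fun u : ℝ × ℝ × ℝ => psi α (1 / (2 * δ) + u.1 / 2)) u := by fun_prop
  have hpsi' : ContinuousAt (fun u : ℝ × ℝ × ℝ => psi α (f₀ + u.1)) u := by fun_prop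
  have hx : ContinuousAt (fun u : ℝ × ℝ × ℝ => psiInv α u.2.2) u :=
    ContinuousAt.comp' (continuousAt_psiInv hy₂) hsnd
  have hinfl : ContinuousAt
      (fun u : ℝ × ℝ × ℝ => inflectionPoly α δ lam u.1 (psiInv α u.2.2)) u := by
    unfold inflectionPoly
    fun_prop
  filter_upwards [continuousAt_const.eventually_lt hfst hu.1, hfst.eventually_lt hpsi hu.2.1,
    hpsi.eventually_lt hsnd hu.2.2.1, continuousAt_const.eventually_lt hinfl hu.2.2.2.1,
    hsnd.eventually_lt hpsi' hu.2.2.2.2] with v h₁ h₂ h₃ h₄ h₅ using ⟨h₁, h₂, h₃, h₄, h₅⟩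

theorem mem_tangencyRegion_iff (hα : 0 < α) (hlt : lam < α * δ)
    (hf : 0 < inflectionPoly α δ lam c (f₀ + c)) {xv : ℝ} (hxv : xv < f₀ + c)
    (hroot : inflectionPoly α δ lam c xv = 0) {y₁ y₂ : ℝ} :
    (c, y₁, y₂) ∈ tangencyRegion α δ lam f₀ ↔ 1 < y₁ ∧ y₁ < psi α (1 / (2 * δ) + c / 2) ∧
      max (psi α (1 / (2 * δ) + c / 2)) (psi α xv) < y₂ ∧ y₂ < psi α (f₀ + c) := by
  have hsign (hy : 0 < y₂) (hlast : y₂ < psi α (f₀ + c)) :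
      0 < inflectionPoly α δ lam c (psiInv α y₂) ↔ psi α xv < y₂ := by
    rw [psi_lt_iff hα hy]
    exact pos_iff_root_lt_of_concaveOn (concaveOn_inflectionPoly hlt) (mem_univ _) (mem_univ _)
      (mem_univ _) hroot hf hxv ((lt_psi_iff hα hy).1 hlast)
  rw [max_lt_iff]
  constructor
  · rintro ⟨h₁, h₂, h₃, h₄, h₅⟩
    exact ⟨h₁, h₂, ⟨h₃, (hsign (psi_pos.trans h₃) h₅).1 h₄⟩, h₅⟩
  · rintro ⟨h₁, h₂, ⟨h₃, h₄⟩, h₅⟩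
    exact ⟨h₁, h₂, h₃, (hsign (psi_pos.trans h₃) h₅).2 h₄, h₅⟩

theorem IsTangencyPair.inflectionPoly_left_pos {y : ℝ × ℝ} (hα : 0 < α) (hδ : 0 < δ)
    (hlt : lam < α * δ) (hc : 0 < c) (h : IsTangencyPair α δ lam f₀ c y) :
    0 < inflectionPoly α δ lam 0 (psiInv α y.1) := by
  obtain ⟨⟨h₁, h₂, h₃, -, -⟩, htan⟩ := h
  have hy₂ : 0 < y.2 := psi_pos.trans h₃
  have hpos {t : ℝ} (ht : y.1 ≤ t) : 0 < t := one_pos.trans (h₁.trans_le ht)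
  have hbelow : obstacle α δ lam 0 y.1 + deriv (obstacle α δ lam 0) y.1 * (y.2 - y.1) <
      obstacle α δ lam 0 y.2 :=
    htan.left_tangent_apply ▸ obstacle_lt_obstacle_zero hδ hc hy₂ ((psi_lt_iff hα hy₂).1 h₃)
  obtain ⟨t, ht, htpos⟩ := exists_deriv2_pos_of_tangent_lt (h₂.trans h₃)
    (fun t ht => (hasDerivAt_obstacle (hpos ht.1)).differentiableAt.differentiableWithinAt)
    (fun t ht => (hasDerivAt_deriv_obstacle hα
      (hpos ht.1)).differentiableAt.differentiableWithinAt) hbelow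
  have ht₀ : 0 < t := hpos ht.1.le
  rw [(hasDerivAt_deriv_obstacle hα ht₀).deriv, div_pos_iff_of_pos_right (by positivity)] at htpos
  have hmono : psiInv α y.1 ≤ psiInv α t :=
    div_le_div_of_nonneg_right (Real.log_le_log (hpos le_rfl) ht.1.le) (by positivity)
  exact htpos.trans_le (antitoneOn_inflectionPoly_zero hlt (psiInv_nonneg h₁.le)
    ((psiInv_nonneg h₁.le).trans hmono) hmono)

theorem contDiffAt_of_isTangencyPair {n : WithTop ℕ∞} (hn : n ≠ 0) {Y : ℝ → ℝ × ℝ} (hα : 0 < α)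
    (hδ : 0 < δ) (hlt : lam < α * δ) (hc : 0 < c) (hY : IsTangencyPair α δ lam f₀ c (Y c))
    (huniq : ∀ᶠ z in 𝓝 c, ∀ y, IsTangencyPair α δ lam f₀ z y → y = Y z) :
    ContDiffAt ℝ n Y c := by
  have hleft := hY.inflectionPoly_left_pos hα hδ hlt hc
  obtain ⟨hmem, htan⟩ := hY
  have ⟨h₁, h₂, h₃, hright, _⟩ := hmem
  have hy₁ : 0 < (Y c).1 := one_pos.trans h₁
  have hy₂ : 0 < (Y c).2 := psi_pos.trans h₃
  refine contDiffAt_of_eventually_unique_tangency hn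
    ((contDiffAt_dualCurve_obstacle hy₁).comp (Y c).1 (contDiffAt_const.prodMk contDiffAt_id))
    (contDiffAt_dualCurve_obstacle hy₂) (hasDerivAt_dualCurve_obstacle hα hy₁)
    (hasDerivAt_dualCurve_obstacle hα hy₂) (by positivity) (by positivity) (h₂.trans h₃).ne
    htan ?_
  filter_upwards [tangencyRegion_mem_nhds hmem, continuousAt_fst.eventually huniq]
    with u hu hunique hsys using hunique u.2 ⟨hu, hsys⟩

theorem contDiffOn_Ioo_of_isTangencyPair {n : WithTop ℕ∞} (hn : n ≠ 0) {Y : ℝ → ℝ × ℝ} {c₂ : ℝ}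
    (hα : 0 < α) (hδ : 0 < δ) (hlt : lam < α * δ)
    (hY : ∀ c ∈ Ioo 0 c₂, IsTangencyPair α δ lam f₀ c (Y c))
    (huniq : ∀ c ∈ Ioo 0 c₂, ∀ y, IsTangencyPair α δ lam f₀ c y → y = Y c) :
    ContDiffOn ℝ n Y (Ioo 0 c₂) := fun c hc =>
  (contDiffAt_of_isTangencyPair hn hα hδ hlt hc.1 (hY c hc)
    (eventually_of_mem (Ioo_mem_nhds hc.1 hc.2) huniq)).contDiffWithinAt

theorem tendsto_of_isTangencyPair {Y : ℝ → ℝ × ℝ} (hα : 0 < α) (hlt : lam < α * δ)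
    (hf₀ : 0 ≤ f₀) (hf : (α * δ - lam) * f₀ ^ 2 < δ)
    (hY : ∀ᶠ c in 𝓝[>] 0, IsTangencyPair α δ lam f₀ c (Y c)) :
    Tendsto Y (𝓝[>] 0) (𝓝 (psi α (1 / (2 * δ)), psi α (1 / (2 * δ)))) := by
  have hψ : Continuous (psi α) := continuous_psi
  have hmid : Tendsto (fun c => psi α (1 / (2 * δ) + c / 2)) (𝓝[>] 0)
      (𝓝 (psi α (1 / (2 * δ)))) :=
    tendsto_nhdsWithin_of_tendsto_nhds (Continuous.tendsto' (by fun_prop) _ _ (by simp))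
  have hlast : Tendsto (fun c => psi α (f₀ + c)) (𝓝[>] 0) (𝓝 (psi α f₀)) :=
    tendsto_nhdsWithin_of_tendsto_nhds (Continuous.tendsto' (by fun_prop) _ _ (by simp))
  exact tendsto_of_injOn_of_squeezed (τ := id)
    (f := fun u : ℝ × ℝ => deriv (obstacle α δ lam u.1) u.2)
    (tendsto_id.mono_left nhdsWithin_le_nhds)
    (fun y hy => continuousAt_deriv_obstacle (one_pos.trans_le hy.1))
    (injOn_deriv_obstacle_zero hα hlt hf₀ hf) hmid hlast
    (hY.mono fun c h => h.1.1.le) (hY.mono fun c h => h.1.2.1.le)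
    (hY.mono fun c h => h.1.2.2.1.le) (hY.mono fun c h => h.1.2.2.2.2.le)
    (hY.mono fun c h => h.2.1)

theorem continuousOn_Ico_of_isTangencyPair {Y : ℝ → ℝ × ℝ} {c₂ : ℝ} (hα : 0 < α)
    (hlt : lam < α * δ) (hf₀ : 0 ≤ f₀) (hf : (α * δ - lam) * f₀ ^ 2 < δ)
    (hY : ∀ c ∈ Ioo 0 c₂, IsTangencyPair α δ lam f₀ c (Y c))
    (hcont : ContinuousOn Y (Ioo 0 c₂))
    (hY₀ : Y 0 = (psi α (1 / (2 * δ)), psi α (1 / (2 * δ)))) : ContinuousOn Y (Ico 0 c₂) := by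
  intro c hc
  rcases hc.1.eq_or_lt with rfl | hc₀
  · have hlim := tendsto_of_isTangencyPair hα hlt hf₀ hf
      (eventually_of_mem (Ioo_mem_nhdsGT hc.2) hY)
    rw [← hY₀] at hlim
    exact (continuousWithinAt_Ioi_iff_Ici.1 hlim).mono Ico_subset_Ici_self
  · exact (hcont.continuousAt (Ioo_mem_nhds hc₀ hc.2)).continuousWithinAt

theorem isTangencyPair_iff {Hl Hr : ℝ → ℝ} {xv y₁ y₂ : ℝ} (hα : 0 < α) (hlt : lam < α * δ)
    (hf : 0 < inflectionPoly α δ lam c (f₀ + c)) (hxv : xv < f₀ + c)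
    (hroot : inflectionPoly α δ lam c xv = 0) (hl : EqOn Hl (obstacle α δ lam 0) (Ioi 0))
    (hr : EqOn Hr (obstacle α δ lam c) (Ioo 0 (psi α (f₀ + c)))) :
    IsTangencyPair α δ lam f₀ c (y₁, y₂) ↔ (1 < y₁ ∧ y₁ < psi α (1 / (2 * δ) + c / 2) ∧
      max (psi α (1 / (2 * δ) + c / 2)) (psi α xv) < y₂ ∧ y₂ < psi α (f₀ + c)) ∧
        TangencySystem Hl Hr y₁ y₂ := by
  rw [← mem_tangencyRegion_iff hα hlt hf hxv hroot]
  refine and_congr_right fun h => (tangencySystem_congr ?_ ?_).symm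
  · exact hl.eventuallyEq_of_mem (Ioi_mem_nhds (one_pos.trans h.1))
  · exact hr.eventuallyEq_of_mem (Ioo_mem_nhds (psi_pos.trans h.2.2.1) h.2.2.2.2)

end Regularity

/-- the tangency-pair functions yh₁, yh₂ are C¹ on (0,c₂) and, extended by
yh₁(0)=yh₂(0)=Ψ(1/(2δ)), continuous on [0,c₂). -/
theorem stmt_14 (α δ lam : ℝ) (hα : 0 < α) (hδ : 0 < δ) (hlam : 0 < lam)
    (hltd : lam < α * δ)
    (f₀ : ℝ)
    (hf₀ : f₀ = (1 / Real.sqrt (2 * α)) * (Real.sqrt ((α * δ + lam) / (α * δ - lam)) - 1))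
    (hf₀big : α / (2 * lam) < f₀)
    (Ψ : ℝ → ℝ) (hΨ : ∀ x, Ψ x = Real.exp (2 * Real.sqrt (2 * α) * x))
    (Hl : ℝ → ℝ)
    (hHl : ∀ y, 0 < y → Hl y = Real.sqrt y *
      (-(lam / α ^ 2) + ((δ - lam / α) / (8 * α)) * (Real.log y) ^ 2))
    (B₀ : ℝ)
    (hB₀ : B₀ = -(2 * f₀ / (α * Real.sqrt (2 * α))) * (α * δ - lam) *
      Real.exp (f₀ * Real.sqrt (2 * α)))
    (hr1 hr2 hr Hr : ℝ → ℝ → ℝ)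
    (hhr1 : ∀ c x, hr1 c x = δ * c * (c - 2 * x) + (δ - lam / α) * x ^ 2 + c - lam / α ^ 2)
    (hhr2 : ∀ c x, hr2 c x = (lam / α) * c * (c - 2 * x) + c +
      B₀ * Real.exp (-(x - c) * Real.sqrt (2 * α)))
    (hhra : ∀ c x, x ≤ f₀ + c → hr c x = hr1 c x)
    (hhrb : ∀ c x, f₀ + c ≤ x → hr c x = hr2 c x)
    (hHr : ∀ c y, 0 < y → Hr c y = Real.sqrt y * hr c (Real.log y / (2 * Real.sqrt (2 * α))))
    (xv : ℝ → ℝ)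
    (hxv : ∀ c, 0 < c →
      (xv c < f₀ + c ∧
        δ - (α * δ - lam) * (xv c) ^ 2 + c * α * (δ * (2 * xv c - c) - 1) = 0 ∧
        ∀ x, x < f₀ + c →
          δ - (α * δ - lam) * x ^ 2 + c * α * (δ * (2 * x - c) - 1) = 0 → x = xv c))
    (c₂ : ℝ) (hc₂pos : 0 < c₂)
    (yh₁ yh₂ : ℝ → ℝ)
    -- for every c ∈ (0,c₂) the pair (yh₁(c), yh₂(c)) is the unique solution of the
    -- tangency system with the stated constraints:
    (hpair : ∀ c, 0 < c → c < c₂ →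
      (1 < yh₁ c ∧ yh₁ c < Ψ (1 / (2 * δ) + c / 2) ∧
        Ψ (1 / (2 * δ) + c / 2) ≤ max (Ψ (1 / (2 * δ) + c / 2)) (Ψ (xv c)) ∧
        max (Ψ (1 / (2 * δ) + c / 2)) (Ψ (xv c)) < yh₂ c ∧ yh₂ c < Ψ (f₀ + c) ∧
        TangencySystem Hl (Hr c) (yh₁ c) (yh₂ c)))
    (huniq : ∀ c, 0 < c → c < c₂ → ∀ y₁ y₂ : ℝ,
      1 < y₁ → y₁ < Ψ (1 / (2 * δ) + c / 2) →
      Ψ (1 / (2 * δ) + c / 2) ≤ max (Ψ (1 / (2 * δ) + c / 2)) (Ψ (xv c)) →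
      max (Ψ (1 / (2 * δ) + c / 2)) (Ψ (xv c)) < y₂ → y₂ < Ψ (f₀ + c) →
      TangencySystem Hl (Hr c) y₁ y₂ → y₁ = yh₁ c ∧ y₂ = yh₂ c)
    -- the extensions to c = 0:
    (hyh₁0 : yh₁ 0 = Ψ (1 / (2 * δ))) (hyh₂0 : yh₂ 0 = Ψ (1 / (2 * δ))) :
    ContDiffOn ℝ 1 yh₁ (Set.Ioo 0 c₂) ∧ ContDiffOn ℝ 1 yh₂ (Set.Ioo 0 c₂) ∧
    ContinuousOn yh₁ (Set.Ico 0 c₂) ∧ ContinuousOn yh₂ (Set.Ico 0 c₂) := by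
  obtain rfl : Ψ = psi α := funext hΨ
  have hf₀pos : 0 < f₀ := lt_trans (by positivity) hf₀big
  have hαf : α ≤ 2 * lam * f₀ := ((div_lt_iff₀' (by positivity)).1 hf₀big).le
  have hf : (α * δ - lam) * f₀ ^ 2 < δ := mul_sq_lt_of_eq_sqrt_sub_one hα hlam hltd hf₀
  have hHl_eq : EqOn Hl (obstacle α δ lam 0) (Ioi 0) := fun y hy =>
    (hHl y hy).trans (obstacle_zero_eq hα).symm
  have hHr_eq (c : ℝ) : EqOn (Hr c) (obstacle α δ lam c) (Ioo 0 (psi α (f₀ + c))) := fun y hy => by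
    rw [hHr c y hy.1, ← psiInv, hhra c _ ((lt_psi_iff hα hy.1).1 hy.2).le, hhr1]
    rfl
  have hiff {c : ℝ} (hc : c ∈ Ioo 0 c₂) (y₁ y₂ : ℝ) :=
    isTangencyPair_iff (y₁ := y₁) (y₂ := y₂) hα hltd
      (inflectionPoly_add_self_pos hlam hf hαf hc.1.le) (hxv c hc.1).1 (hxv c hc.1).2.1
      hHl_eq (hHr_eq c)
  have hY : ∀ c ∈ Ioo 0 c₂, IsTangencyPair α δ lam f₀ c (yh₁ c, yh₂ c) := fun c hc =>
    let ⟨h₁, h₂, _, h₃, h₄, htan⟩ := hpair c hc.1 hc.2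
    (hiff hc _ _).2 ⟨⟨h₁, h₂, h₃, h₄⟩, htan⟩
  have hunique : ∀ c ∈ Ioo 0 c₂, ∀ y, IsTangencyPair α δ lam f₀ c y → y = (yh₁ c, yh₂ c) :=
    fun c hc y hy =>
      let ⟨⟨h₁, h₂, h₃, h₄⟩, htan⟩ := (hiff hc _ _).1 hy
      Prod.ext_iff.2 (huniq c hc.1 hc.2 _ _ h₁ h₂ (le_max_left _ _) h₃ h₄ htan)
  have hC1 := contDiffOn_Ioo_of_isTangencyPair one_ne_zero hα hδ hltd hY hunique
  have hcont := continuousOn_Ico_of_isTangencyPair hα hltd hf₀pos.le hf hY hC1.continuousOn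
    (Prod.ext hyh₁0 hyh₂0)
  exact ⟨hC1.fst, hC1.snd, hcont.fst, hcont.snd⟩
end

section
/- Let c₂>0 be such that for every c ∈ (0,c₂) there is a unique pair (ŷ₁(c),ŷ₂(c)) with 1 < ŷ₁(c) < y_c ≤ y_v(c) < ŷ₂(c) < ŷ₃(c) solving the tangency system, and set F(c)=Ψ⁻¹(ŷ₁(c)) and G(c)=Ψ⁻¹(ŷ₂(c)). Then for every c ∈ (0,c₂): the function L is well defined and differentiable in an open neighbourhood of (G(c),c); ∂L/∂x(G(c),c) < 0; the function G is differentiable at c; and G'(c) = 1 − q(G(c);F(c)) / (∂L/∂x)(G(c),c). -/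
/-!
A line tangent to two curves is a coincidence of slope and intercept. The tangent lines to one curve
envelop it, so along it the intercept changes at minus the contact abscissa times the rate of the
slope. Inverting the slope on the left branch, where it increases, turns the tangency system into
the single equation `L(x, c) = 0`; by the envelope relation the derivative of `L` is that of the
intercept on the right branch plus `exp (2 * s * F c)` times that of the slope, where
`s = √(2 * α)`. In the direction `(1, 0)` this is a positive multiple of
`exp (2 * s * F c - s * G c) - exp (s * G c)`, negative since `F c < G c`. In the direction `(1, 1)`
it is `q`, because moving `x` and `c` together changes the payoff at an affine rate, whose slope and
intercept are `h₃` and `-h₄`. Uniqueness of the tangent pair identifies `G` near `c` with the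
implicit function of `L = 0`.
-/

open Filter Topology Set

section Monotonicity

variable {f : ℝ → ℝ} {a b v x : ℝ}

lemma pos_of_concaveOn_of_mem_Icc (hf : ConcaveOn ℝ univ f) (ha : 0 < f a) (hb : 0 < f b)
    (hx : x ∈ Icc a b) : 0 < f x :=
  (lt_min ha hb).trans_le (hf.min_le_of_mem_Icc trivial trivial hx)

lemma pos_iff_lt_of_concaveOn (hf : ConcaveOn ℝ univ f) (hv : f v = 0) (hb : 0 < f b)
    (hvb : v < b) (hxb : x < b) : 0 < f x ↔ v < x := by
  refine ⟨fun hx => ?_, fun hvx => ?_⟩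
  · by_contra! hxv
    exact (pos_of_concaveOn_of_mem_Icc hf hx hb ⟨hxv, hvb.le⟩).ne' hv
  · rw [← hv] at hb ⊢
    by_contra! hxv
    exact hxv.not_gt <| hf.left_lt_of_lt_right trivial trivial
      (openSegment_eq_Ioo hvb ▸ ⟨hvx, hxb⟩ : x ∈ openSegment ℝ v b) (hxv.trans_lt hb)

lemma concaveOn_quadratic (ha : a ≤ 0) (b c : ℝ) :
    ConcaveOn ℝ univ fun x : ℝ => a * x ^ 2 + b * x + c := by
  refine ⟨convex_univ, fun x _ y _ p q hp hq hpq => ?_⟩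
  obtain rfl : q = 1 - p := by linarith
  have hgap : a * (p * (1 - p) * (x - y) ^ 2) ≤ 0 :=
    mul_nonpos_of_nonpos_of_nonneg ha (by positivity)
  simp only [smul_eq_mul]
  linarith

variable {inv : ℝ → ℝ} {ya yb : ℝ}

lemma leftInvOn_Icc_of_strictMonoOn (hf : StrictMonoOn f (Icc a b)) (ha : f a = ya)
    (hb : f b = yb) (hinv : ∀ w ∈ Icc ya yb, inv w ∈ Icc a b ∧ f (inv w) = w) :
    LeftInvOn inv f (Icc a b) := by
  subst ha hb
  exact hf.injOn.rightInvOn_of_leftInvOn (fun w hw => (hinv w hw).2) hf.monotoneOn.mapsTo_Icc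
    fun w hw => (hinv w hw).1

lemma mapsTo_Ioo_of_strictMonoOn (hf : StrictMonoOn f (Icc a b)) (hab : a ≤ b) (ha : f a = ya)
    (hb : f b = yb) (hinv : ∀ w ∈ Icc ya yb, inv w ∈ Icc a b ∧ f (inv w) = w) :
    MapsTo inv (Ioo ya yb) (Ioo a b) := by
  subst ha hb
  intro w hw
  obtain ⟨hmem, hright⟩ := hinv w (Ioo_subset_Icc_self hw)
  rw [← hright] at hw
  exact ⟨(hf.lt_iff_lt (left_mem_Icc.2 hab) hmem).1 hw.1,
    (hf.lt_iff_lt hmem (right_mem_Icc.2 hab)).1 hw.2⟩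

end Monotonicity

section ImplicitFunction

variable {E : Type*} [NormedAddCommGroup E] [NormedSpace ℝ E]

lemma hasStrictDerivAt_slice {f : ℝ × ℝ → ℝ} {f' : ℝ × ℝ →L[ℝ] ℝ} {x c : ℝ}
    (hf : HasStrictFDerivAt f f' (x, c)) : HasStrictDerivAt (fun t => f (t, c)) (f' (1, 0)) x :=
  hf.comp_hasStrictDerivAt x ((hasStrictDerivAt_id x).prodMk (hasStrictDerivAt_const x c))

lemma deriv_slice_of_eqOn {f g : ℝ × ℝ → ℝ} {g' : ℝ × ℝ →L[ℝ] ℝ} {U : Set (ℝ × ℝ)} {x c : ℝ}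
    (hU : IsOpen U) (hp : (x, c) ∈ U) (heq : EqOn f g U) (hg : HasStrictFDerivAt g g' (x, c)) :
    deriv (fun t => f (t, c)) x = g' (1, 0) :=
  (hasStrictDerivAt_slice <| hg.congr_of_eventuallyEq <|
    heq.symm.eventuallyEq_of_mem (hU.mem_nhds hp)).hasDerivAt.deriv

theorem exists_implicit_differentiableAt {f : ℝ × ℝ → ℝ} {f' : ℝ × ℝ →L[ℝ] ℝ} {x c : ℝ}
    (hf : HasStrictFDerivAt f f' (x, c)) (hx : f' (1, 0) ≠ 0) :
    ∃ g : ℝ → ℝ, g c = x ∧ DifferentiableAt ℝ g c ∧ ∀ᶠ t in 𝓝 c, f (g t, t) = f (x, c) := by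
  have hswap : HasStrictFDerivAt (f ∘ Prod.swap)
      (f' ∘L (ContinuousLinearMap.snd ℝ ℝ ℝ).prod (ContinuousLinearMap.fst ℝ ℝ ℝ)) (c, x) :=
    HasStrictFDerivAt.comp (g := f) (f := Prod.swap) (c, x) hf
      (hasStrictFDerivAt_snd.prodMk hasStrictFDerivAt_fst)
  have hinv : ((f' ∘L (ContinuousLinearMap.snd ℝ ℝ ℝ).prod (ContinuousLinearMap.fst ℝ ℝ ℝ)) ∘L
      .inr ℝ ℝ ℝ).IsInvertible := by
    refine ⟨ContinuousLinearEquiv.unitsEquivAut ℝ (Units.mk0 _ hx), ?_⟩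
    ext
    simp
  exact ⟨hswap.implicitFunctionOfProdDomain hinv,
    (hswap.eventually_apply_eq_iff_implicitFunctionOfProdDomain hinv).self_of_nhds.1 rfl,
    (hswap.hasStrictFDerivAt_implicitFunctionOfProdDomain hinv).hasFDerivAt.differentiableAt,
    hswap.eventually_apply_implicitFunctionOfProdDomain hinv⟩

theorem hasDerivAt_of_eventually_eq_zero_imp {f : ℝ × ℝ → ℝ} {f' : ℝ × ℝ →L[ℝ] ℝ} {G : ℝ → ℝ}
    {c : ℝ} (hf : HasStrictFDerivAt f f' (G c, c)) (hf' : f' (1, 0) ≠ 0) (h0 : f (G c, c) = 0)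
    (huniq : ∀ᶠ p in 𝓝 (G c, c), f p = 0 → p.1 = G p.2) :
    HasDerivAt G (1 - f' (1, 1) / f' (1, 0)) c := by
  obtain ⟨g, hgc, hg, hg0⟩ := exists_implicit_differentiableAt hf hf'
  rw [h0] at hg0
  have hcurve : Tendsto (fun t => (g t, t)) (𝓝 c) (𝓝 (G c, c)) :=
    hgc ▸ hg.continuousAt.prodMk continuousAt_id
  have hgG : g =ᶠ[𝓝 c] G := by
    filter_upwards [hcurve.eventually huniq, hg0] with t ht ht0 using ht ht0
  have hchain : HasDerivAt (fun t => f (g t, t)) (f' (deriv g c, 1)) c :=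
    HasFDerivAt.comp_hasDerivAt_of_eq c hf.hasFDerivAt (hg.hasDerivAt.prodMk (hasDerivAt_id c))
      (by rw [hgc])
  have hzero : f' (deriv g c, 1) = 0 :=
    hchain.unique ((hasDerivAt_const c (0 : ℝ)).congr_of_eventuallyEq hg0)
  have hsplit : ((deriv g c, 1) : ℝ × ℝ) = (1, 1) + (deriv g c - 1) • ((1, 0) : ℝ × ℝ) := by
    ext <;> simp
  rw [hsplit, map_add, map_smul, smul_eq_mul] at hzero
  refine (hg.hasDerivAt.congr_of_eventuallyEq hgG.symm).congr_deriv ?_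
  field_simp
  linarith

theorem hasStrictFDerivAt_sub_comp_leftInverse {f₁ f₂ inv : ℝ → ℝ} {g₁ g₂ : E → ℝ}
    {g₁' g₂' : E →L[ℝ] ℝ} {p : E} {a Y z : ℝ} (hf₁ : HasStrictDerivAt f₁ a z) (ha : a ≠ 0)
    (hf₂ : HasStrictDerivAt f₂ (-(Y * a)) z) (hinv : ∀ᶠ t in 𝓝 z, inv (f₁ t) = t)
    (hg₁ : HasStrictFDerivAt g₁ g₁' p) (hg₂ : HasStrictFDerivAt g₂ g₂' p) (hp : f₁ z = g₁ p) :
    HasStrictFDerivAt (fun w => g₂ w - f₂ (inv (g₁ w))) (g₂' + Y • g₁') p := by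
  have hcomp : HasStrictDerivAt (f₂ ∘ inv) (-(Y * a) * a⁻¹) (g₁ p) := by
    rw [← hp]
    exact hf₂.comp_of_eq _ (hf₁.to_local_left_inverse ha hinv) hinv.self_of_nhds.symm
  refine (hg₂.sub (hcomp.comp_hasStrictFDerivAt p hg₁)).congr_fderiv ?_
  rw [neg_mul, mul_inv_cancel_right₀ ha, neg_smul, sub_neg_eq_add]

-- `f₂' = -Y f₁'` says that the lines of slope `f₁` and intercept `f₂` envelop a curve, touched at
-- abscissa `Y`.
theorem hasDerivAt_of_common_tangent {f₁ f₂ G : ℝ → ℝ} {g₁ g₂ : ℝ × ℝ → ℝ}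
    {g₁' g₂' : ℝ × ℝ →L[ℝ] ℝ} {a Y z c : ℝ} (hf₁ : HasStrictDerivAt f₁ a z) (ha : a ≠ 0)
    (hf₂ : HasStrictDerivAt f₂ (-(Y * a)) z) (hg₁ : HasStrictFDerivAt g₁ g₁' (G c, c))
    (hg₂ : HasStrictFDerivAt g₂ g₂' (G c, c)) (hne : (g₂' + Y • g₁') (1, 0) ≠ 0)
    (hslope : f₁ z = g₁ (G c, c)) (hintercept : f₂ z = g₂ (G c, c))
    (huniq : ∀ᶠ w : ℝ × ℝ × ℝ in 𝓝 (z, G c, c),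
      f₁ w.1 = g₁ w.2 → f₂ w.1 = g₂ w.2 → w.2.1 = G w.2.2) :
    HasDerivAt G (1 - (g₂' + Y • g₁') (1, 1) / (g₂' + Y • g₁') (1, 0)) c := by
  let inv := hf₁.localInverse f₁ a z ha
  have hleft : ∀ᶠ t in 𝓝 z, inv (f₁ t) = t :=
    (hf₁.hasStrictFDerivAt_equiv ha).eventually_left_inverse
  have hright : ∀ᶠ w in 𝓝 (f₁ z), f₁ (inv w) = w :=
    (hf₁.hasStrictFDerivAt_equiv ha).eventually_right_inverse
  have hcg₁ : Tendsto g₁ (𝓝 (G c, c)) (𝓝 (f₁ z)) := hslope ▸ hg₁.continuousAt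
  have hcinv : ContinuousAt inv (f₁ z) := (hf₁.to_localInverse ha).hasDerivAt.continuousAt
  rw [ContinuousAt, hleft.self_of_nhds] at hcinv
  have hL := hasStrictFDerivAt_sub_comp_leftInverse hf₁ ha hf₂ hleft hg₁ hg₂ hslope
  refine hasDerivAt_of_eventually_eq_zero_imp hL hne ?_ ?_
  · rw [← hslope, hleft.self_of_nhds, hintercept, sub_self]
  · filter_upwards [((hcinv.comp hcg₁).prodMk_nhds tendsto_id).eventually huniq,
      hcg₁.eventually hright] with p hp hpinv hzero
    exact hp hpinv (sub_eq_zero.1 hzero).symm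

end ImplicitFunction

noncomputable section TangentData

/-- The transform of a payoff `k` into the natural scale `y = exp (2 * s * x)`, divided by the
decreasing fundamental solution `exp (-s * x)` of `u'' = s ^ 2 * u`. -/
def naturalTransform (s : ℝ) (k : ℝ → ℝ) (y : ℝ) : ℝ := √y * k (Real.log y / (2 * s))

/-- The slope of the tangent to `naturalTransform s k` at `y = exp (2 * s * x)`. -/
def tangentSlope (s : ℝ) (k : ℝ → ℝ) (x : ℝ) : ℝ :=
  Real.exp (-x * s) / (2 * s) * (deriv k x + s * k x)

/-- The intercept of the tangent to `naturalTransform s k` at `y = exp (2 * s * x)`. -/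
def tangentIntercept (s : ℝ) (k : ℝ → ℝ) (x : ℝ) : ℝ :=
  Real.exp (x * s) / (2 * s) * (-deriv k x + s * k x)

/-- The linear form on the plane with value `a` on `(1, 0)` and `b` on `(1, 1)`. Derivatives of
functions of `(x, c)` are recorded this way because the problem is nearly invariant under moving
`x` and `c` together. -/
def shearForm (a b : ℝ) : ℝ × ℝ →L[ℝ] ℝ :=
  a • (ContinuousLinearMap.fst ℝ ℝ ℝ - ContinuousLinearMap.snd ℝ ℝ ℝ) +
    b • ContinuousLinearMap.snd ℝ ℝ ℝ

@[simp]
lemma shearForm_apply (a b : ℝ) (p : ℝ × ℝ) : shearForm a b p = a * (p.1 - p.2) + b * p.2 := rfl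

variable {s x z : ℝ} {k l : ℝ → ℝ}

lemma sqrt_exp_two_mul (s x : ℝ) : √(Real.exp (2 * s * x)) = Real.exp (x * s) := by
  rw [mul_assoc, two_mul, Real.exp_add, Real.sqrt_mul_self (Real.exp_pos _).le, mul_comm]

lemma log_exp_div (hs : s ≠ 0) (x : ℝ) : Real.log (Real.exp (2 * s * x)) / (2 * s) = x := by
  rw [Real.log_exp, mul_div_cancel_left₀ x (mul_ne_zero two_ne_zero hs)]

lemma exp_two_mul (s x : ℝ) : Real.exp (2 * s * x) = Real.exp (x * s) * Real.exp (x * s) := by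
  rw [← Real.exp_add]; ring_nf

lemma tangentSlope_neg (s : ℝ) (k : ℝ → ℝ) (x : ℝ) :
    tangentSlope (-s) k x = tangentIntercept s k x := by
  rw [tangentSlope, tangentIntercept, neg_mul_neg, mul_neg, div_neg]
  ring

lemma naturalTransform_exp (hs : s ≠ 0) (k : ℝ → ℝ) (x : ℝ) :
    naturalTransform s k (Real.exp (2 * s * x)) = Real.exp (x * s) * k x := by
  rw [naturalTransform, sqrt_exp_two_mul, log_exp_div hs]

lemma hasDerivAt_naturalTransform (hs : s ≠ 0) (hk : DifferentiableAt ℝ k x) :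
    HasDerivAt (naturalTransform s k) (tangentSlope s k x) (Real.exp (2 * s * x)) := by
  have hy := (Real.exp_pos (2 * s * x)).ne'
  have hcomp : HasDerivAt (fun y => k (Real.log y / (2 * s)))
      (deriv k x * ((Real.exp (2 * s * x))⁻¹ / (2 * s))) (Real.exp (2 * s * x)) :=
    hk.hasDerivAt.comp_of_eq _ ((Real.hasDerivAt_log hy).div_const _) (log_exp_div hs x).symm
  refine ((Real.hasDerivAt_sqrt hy).mul hcomp).congr_deriv ?_
  rw [log_exp_div hs, sqrt_exp_two_mul, exp_two_mul, tangentSlope, neg_mul, Real.exp_neg]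
  have := Real.exp_pos (x * s)
  field_simp
  ring

lemma naturalTransform_sub_tangentSlope_mul (hs : s ≠ 0) (k : ℝ → ℝ) (x : ℝ) :
    naturalTransform s k (Real.exp (2 * s * x)) - tangentSlope s k x * Real.exp (2 * s * x) =
      tangentIntercept s k x := by
  rw [naturalTransform_exp hs, exp_two_mul, tangentSlope, tangentIntercept, neg_mul, Real.exp_neg]
  have := Real.exp_pos (x * s)
  field_simp
  ring

theorem tangencySystem_iff (hs : s ≠ 0) {f g : ℝ → ℝ}
    (hf : f =ᶠ[𝓝 (Real.exp (2 * s * z))] naturalTransform s k) (hk : DifferentiableAt ℝ k z)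
    (hg : g =ᶠ[𝓝 (Real.exp (2 * s * x))] naturalTransform s l) (hl : DifferentiableAt ℝ l x) :
    TangencySystem f g (Real.exp (2 * s * z)) (Real.exp (2 * s * x)) ↔
      tangentSlope s k z = tangentSlope s l x ∧
        tangentIntercept s k z = tangentIntercept s l x := by
  rw [TangencySystem, hf.deriv_eq, hg.deriv_eq, hf.eq_of_nhds, hg.eq_of_nhds,
    (hasDerivAt_naturalTransform hs hk).deriv, (hasDerivAt_naturalTransform hs hl).deriv,
    naturalTransform_sub_tangentSlope_mul hs, naturalTransform_sub_tangentSlope_mul hs]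

variable {K : ℝ → ℝ → ℝ} {m : ℝ → ℝ} {c d : ℝ}

lemma hasStrictFDerivAt_tangentSlope
    (hK : HasStrictFDerivAt (fun p : ℝ × ℝ => K p.2 p.1) (shearForm (deriv (K c) x) (m x)) (x, c))
    (hK' : HasStrictFDerivAt (fun p : ℝ × ℝ => deriv (K p.2) p.1) (shearForm d (deriv m x))
      (x, c)) :
    HasStrictFDerivAt (fun p : ℝ × ℝ => tangentSlope s (K p.2) p.1)
      (shearForm (Real.exp (-x * s) / (2 * s) * (d - s ^ 2 * K c x))
        (tangentSlope s m x - s * tangentSlope s (K c) x)) (x, c) := by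
  have hexp : HasStrictFDerivAt (fun p : ℝ × ℝ => Real.exp (-p.1 * s))
      (Real.exp (-x * s) • s • -ContinuousLinearMap.fst ℝ ℝ ℝ) (x, c) :=
    ((hasStrictFDerivAt_fst (p := (x, c))).fun_neg.mul_const s).exp
  simp only [tangentSlope, div_eq_mul_inv]
  refine ((hexp.mul_const (2 * s)⁻¹).mul (hK'.add (hK.const_mul s))).congr_fderiv ?_
  refine ContinuousLinearMap.ext fun v => ?_
  simp only [add_apply, neg_apply, smul_apply, smul_eq_mul, shearForm_apply, Pi.add_apply,
    ContinuousLinearMap.coe_fst']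
  ring

lemma hasStrictFDerivAt_tangentIntercept
    (hK : HasStrictFDerivAt (fun p : ℝ × ℝ => K p.2 p.1) (shearForm (deriv (K c) x) (m x)) (x, c))
    (hK' : HasStrictFDerivAt (fun p : ℝ × ℝ => deriv (K p.2) p.1) (shearForm d (deriv m x))
      (x, c)) :
    HasStrictFDerivAt (fun p : ℝ × ℝ => tangentIntercept s (K p.2) p.1)
      (shearForm (-(Real.exp (x * s) / (2 * s) * (d - s ^ 2 * K c x)))
        (tangentIntercept s m x + s * tangentIntercept s (K c) x)) (x, c) := by
  have h := hasStrictFDerivAt_tangentSlope (s := -s) hK hK'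
  simp only [tangentSlope_neg] at h
  convert h using 2 <;> ring_nf

end TangentData

noncomputable section Payoff

/-- The payoff `h_{r1}(·; c)`; at `c = 0` it is the payoff whose transform is `H_l`. -/
def payoff (α δ lam c x : ℝ) : ℝ :=
  δ * c * (c - 2 * x) + (δ - lam / α) * x ^ 2 + c - lam / α ^ 2

/-- The derivative of `payoff` when `x` and `c` move together. The functions `h₃` and `-h₄` of the
theorem are its `tangentSlope` and `tangentIntercept`. -/
def payoffDrift (α lam x : ℝ) : ℝ := 1 - 2 * (lam / α) * x

/-- The payoff `h_{r1}(·; c)` under the generator `u ↦ u'' / 2 - α * u` of Brownian motion killed at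
rate `α`. The threshold `x_v(c)` is a root of it. -/
def payoffGenerator (α δ lam c x : ℝ) : ℝ :=
  δ - (α * δ - lam) * x ^ 2 + c * α * (δ * (2 * x - c) - 1)

/-- The quadratic `ρ` of the theorem, up to a positive factor the slope data of `payoff` at `c = 0`;
`f₀` is its positive root. -/
def rho (α δ lam s x : ℝ) : ℝ := x ^ 2 + 2 * x / s - lam / α / (α * δ - lam)

variable {α δ lam s c x : ℝ}

lemma hasDerivAt_payoff (α δ lam c x : ℝ) :
    HasDerivAt (payoff α δ lam c) (2 * (δ - lam / α) * x - 2 * δ * c) x := by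
  refine ((((((hasDerivAt_id' x).const_mul 2).const_sub c).const_mul (δ * c)).add
    (((hasDerivAt_id' x).pow 2).const_mul (δ - lam / α))).add_const c).sub_const
      (lam / α ^ 2) |>.congr_deriv ?_
  simp only [Nat.cast_ofNat, Nat.add_one_sub_one, pow_one, mul_one]
  ring

lemma deriv_payoffDrift (α lam x : ℝ) : deriv (payoffDrift α lam) x = -(2 * (lam / α)) := by
  rw [← mul_one (2 * (lam / α))]
  exact (((hasDerivAt_id' x).const_mul (2 * (lam / α))).const_sub 1).deriv

lemma hasStrictFDerivAt_payoff (α δ lam x c : ℝ) :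
    HasStrictFDerivAt (fun p : ℝ × ℝ => payoff α δ lam p.2 p.1)
      (shearForm (deriv (payoff α δ lam c) x) (payoffDrift α lam x)) (x, c) := by
  have hx : HasStrictFDerivAt Prod.fst (ContinuousLinearMap.fst ℝ ℝ ℝ) (x, c) :=
    hasStrictFDerivAt_fst
  have hc : HasStrictFDerivAt Prod.snd (ContinuousLinearMap.snd ℝ ℝ ℝ) (x, c) :=
    hasStrictFDerivAt_snd
  refine (((((hc.const_mul δ).mul (hc.sub (hx.const_mul 2))).add
    ((hx.pow 2).const_mul (δ - lam / α))).add hc).sub_const (lam / α ^ 2)).congr_fderiv ?_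
  rw [(hasDerivAt_payoff α δ lam c x).deriv]
  refine ContinuousLinearMap.ext fun v => ?_
  simp only [add_apply, sub_apply, smul_apply, smul_eq_mul, shearForm_apply, payoffDrift,
    ContinuousLinearMap.coe_fst', ContinuousLinearMap.coe_snd', nsmul_eq_mul, Nat.cast_ofNat,
    Nat.add_one_sub_one, pow_one, Pi.sub_apply]
  ring

lemma hasStrictFDerivAt_deriv_payoff (α δ lam x c : ℝ) :
    HasStrictFDerivAt (fun p : ℝ × ℝ => deriv (payoff α δ lam p.2) p.1)
      (shearForm (2 * (δ - lam / α)) (deriv (payoffDrift α lam) x)) (x, c) := by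
  simp only [(hasDerivAt_payoff α δ lam _ _).deriv, deriv_payoffDrift]
  refine ((hasStrictFDerivAt_fst.const_mul (2 * (δ - lam / α))).sub
    (hasStrictFDerivAt_snd.const_mul (2 * δ))).congr_fderiv ?_
  refine ContinuousLinearMap.ext fun v => ?_
  simp only [sub_apply, smul_apply, smul_eq_mul, shearForm_apply, ContinuousLinearMap.coe_fst',
    ContinuousLinearMap.coe_snd']
  ring

lemma two_mul_payoffGenerator (hα : α ≠ 0) (δ lam c x : ℝ) :
    2 * (δ - lam / α) - 2 * α * payoff α δ lam c x = 2 * payoffGenerator α δ lam c x := by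
  rw [payoff, payoffGenerator]
  field_simp
  ring

lemma hasStrictFDerivAt_tangentSlope_payoff (hα : α ≠ 0) (hsα : s ^ 2 = 2 * α) (δ lam x c : ℝ) :
    HasStrictFDerivAt (fun p : ℝ × ℝ => tangentSlope s (payoff α δ lam p.2) p.1)
      (shearForm (Real.exp (-x * s) / s * payoffGenerator α δ lam c x)
        (tangentSlope s (payoffDrift α lam) x - s * tangentSlope s (payoff α δ lam c) x))
      (x, c) := by
  convert hasStrictFDerivAt_tangentSlope (s := s) (hasStrictFDerivAt_payoff α δ lam x c)
    (hasStrictFDerivAt_deriv_payoff α δ lam x c) using 2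
  rw [hsα, two_mul_payoffGenerator hα]
  ring

lemma hasStrictFDerivAt_tangentIntercept_payoff (hα : α ≠ 0) (hsα : s ^ 2 = 2 * α)
    (δ lam x c : ℝ) :
    HasStrictFDerivAt (fun p : ℝ × ℝ => tangentIntercept s (payoff α δ lam p.2) p.1)
      (shearForm (-(Real.exp (x * s) / s * payoffGenerator α δ lam c x))
        (tangentIntercept s (payoffDrift α lam) x + s * tangentIntercept s (payoff α δ lam c) x))
      (x, c) := by
  convert hasStrictFDerivAt_tangentIntercept (s := s) (hasStrictFDerivAt_payoff α δ lam x c)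
    (hasStrictFDerivAt_deriv_payoff α δ lam x c) using 2
  rw [hsα, two_mul_payoffGenerator hα]
  ring

lemma hasStrictDerivAt_tangentSlope_payoff (hα : α ≠ 0) (hsα : s ^ 2 = 2 * α) (δ lam c x : ℝ) :
    HasStrictDerivAt (tangentSlope s (payoff α δ lam c))
      (Real.exp (-x * s) / s * payoffGenerator α δ lam c x) x := by
  simpa using hasStrictDerivAt_slice (hasStrictFDerivAt_tangentSlope_payoff hα hsα δ lam x c)

lemma hasStrictDerivAt_tangentIntercept_payoff (hα : α ≠ 0) (hsα : s ^ 2 = 2 * α)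
    (δ lam c x : ℝ) :
    HasStrictDerivAt (tangentIntercept s (payoff α δ lam c))
      (-(Real.exp (2 * s * x) * (Real.exp (-x * s) / s * payoffGenerator α δ lam c x))) x := by
  have h := hasStrictDerivAt_slice (hasStrictFDerivAt_tangentIntercept_payoff hα hsα δ lam x c)
  have hexp : Real.exp (2 * s * x) * Real.exp (-x * s) = Real.exp (x * s) := by
    rw [← Real.exp_add]; ring_nf
  rw [← mul_assoc, ← mul_div_assoc, hexp]
  simpa using h

lemma strictMonoOn_tangentSlope_payoff (hα : α ≠ 0) (hs : 0 < s) (hsα : s ^ 2 = 2 * α) {a b : ℝ}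
    (hgen : ∀ t ∈ Icc a b, 0 < payoffGenerator α δ lam c t) :
    StrictMonoOn (tangentSlope s (payoff α δ lam c)) (Icc a b) := by
  have hderiv t := (hasStrictDerivAt_tangentSlope_payoff hα hsα δ lam c t).hasDerivAt
  refine strictMonoOn_of_deriv_pos (convex_Icc a b)
    (fun t _ => (hderiv t).continuousAt.continuousWithinAt) fun t ht => ?_
  have := hgen t (interior_subset ht)
  rw [(hderiv t).deriv]
  positivity

lemma concaveOn_payoffGenerator (hd : lam ≤ α * δ) (c : ℝ) :
    ConcaveOn ℝ univ (payoffGenerator α δ lam c) := by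
  convert concaveOn_quadratic (neg_nonpos.2 (sub_nonneg.2 hd)) (2 * c * α * δ)
    (δ - c * α * (δ * c + 1)) using 2 with x
  rw [payoffGenerator]
  ring

end Payoff

section Boundary

variable {α δ lam s f₀ c x : ℝ}

lemma tangentSlope_payoff_zero (hα : α ≠ 0) (hs : s ≠ 0) (hd : α * δ - lam ≠ 0) (x : ℝ) :
    tangentSlope s (payoff α δ lam 0) x =
      (α * δ - lam) / (2 * α) * Real.exp (-x * s) * rho α δ lam s x := by
  rw [tangentSlope, (hasDerivAt_payoff α δ lam 0 x).deriv, payoff, rho]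
  field_simp
  linear_combination lam * s * mul_inv_cancel₀ hd

lemma tangentSlope_payoff_zero_zero (hs : s ≠ 0) (α δ lam : ℝ) :
    tangentSlope s (payoff α δ lam 0) 0 = -(lam / (2 * α ^ 2)) := by
  rw [tangentSlope, (hasDerivAt_payoff α δ lam 0 0).deriv, payoff, neg_zero, zero_mul,
    Real.exp_zero]
  field_simp
  ring

lemma tangentSlope_payoff_zero_root (hα : α ≠ 0) (hs : s ≠ 0) (hd : α * δ - lam ≠ 0)
    (hroot : rho α δ lam s f₀ = 0) :
    tangentSlope s (payoff α δ lam 0) f₀ = 0 := by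
  rw [tangentSlope_payoff_zero hα hs hd, hroot, mul_zero]

lemma tangentIntercept_payoff_zero (hα : α ≠ 0) (hs : s ≠ 0) (hd : α * δ - lam ≠ 0) (x : ℝ) :
    tangentIntercept s (payoff α δ lam 0) x =
      (α * δ - lam) / (2 * α) * Real.exp (x * s) * (rho α δ lam s x - 4 * x / s) := by
  rw [← tangentSlope_neg, tangentSlope_payoff_zero hα (neg_ne_zero.2 hs) hd,
    neg_mul_neg, rho, rho, div_neg]
  ring

lemma tangentSlope_payoffDrift (hα : α ≠ 0) (hlam : lam ≠ 0) (hs : s ≠ 0) (x : ℝ) :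
    tangentSlope s (payoffDrift α lam) x =
      lam / α * (α / (2 * lam) - x - 1 / s) * Real.exp (-x * s) := by
  rw [tangentSlope, deriv_payoffDrift, payoffDrift]
  field_simp
  ring

lemma neg_tangentIntercept_payoffDrift (hα : α ≠ 0) (hlam : lam ≠ 0) (hs : s ≠ 0) (x : ℝ) :
    -tangentIntercept s (payoffDrift α lam) x =
      lam / α * (x - α / (2 * lam) - 1 / s) * Real.exp (x * s) := by
  rw [← tangentSlope_neg, tangentSlope_payoffDrift hα hlam (neg_ne_zero.2 hs), neg_mul_neg,
    div_neg]
  ring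

lemma rho_root (hα : α ≠ 0) (hs : s ≠ 0) (hsα : s ^ 2 = 2 * α) (hd : α * δ - lam ≠ 0)
    (hr : 0 ≤ (α * δ + lam) / (α * δ - lam)) :
    rho α δ lam s (1 / s * (√((α * δ + lam) / (α * δ - lam)) - 1)) = 0 := by
  have hsq := Real.sq_sqrt hr
  set r := √((α * δ + lam) / (α * δ - lam))
  have hcomplete : rho α δ lam s (1 / s * (r - 1)) =
      (r ^ 2 - (α * δ + lam) / (α * δ - lam)) / s ^ 2 := by
    rw [rho]
    field_simp
    linear_combination -lam * hsα
  rw [hcomplete, hsq, sub_self, zero_div]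

lemma rho_le_rho (hs : 0 ≤ s) (hf₀ : 0 ≤ f₀) (hx : f₀ ≤ x) :
    rho α δ lam s f₀ ≤ rho α δ lam s x := by
  rw [rho, rho]
  gcongr

lemma payoffGenerator_zero_pos (hα : 0 < α) (hs : 0 < s) (hd : lam < α * δ)
    (hroot : rho α δ lam s f₀ = 0) (hx : x ∈ Icc 0 f₀) : 0 < payoffGenerator α δ lam 0 x := by
  have hd' := sub_pos.2 hd
  have hf₀ := hx.1.trans hx.2
  have hsq : x ^ 2 ≤ lam / α / (α * δ - lam) :=
    calc x ^ 2 ≤ f₀ ^ 2 := pow_le_pow_left₀ hx.1 hx.2 2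
      _ ≤ f₀ ^ 2 + 2 * f₀ / s := le_add_of_nonneg_right (by positivity)
      _ = lam / α / (α * δ - lam) := sub_eq_zero.1 hroot
  have hδ : lam / α < δ := (div_lt_iff₀' hα).2 hd
  rw [le_div_iff₀ hd'] at hsq
  rw [payoffGenerator]
  linarith

-- `payoff (x + t)` at `c = t` has `t`-derivative `payoffDrift (x + t)`, affine in `t`: hence the
-- midpoint value.
lemma tangentSlope_payoff_add (s α δ lam c x : ℝ) :
    tangentSlope s (payoff α δ lam c) (x + c) =
      Real.exp (-c * s) * tangentSlope s (payoff α δ lam 0) x +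
        Real.exp (-(x + c) * s) / (2 * s) *
          (s * c * payoffDrift α lam (x + c / 2) - 2 * (lam / α) * c) := by
  rw [show -(x + c) * s = -c * s + -x * s by ring, Real.exp_add, tangentSlope, tangentSlope,
    show -(x + c) * s = -c * s + -x * s by ring, Real.exp_add,
    (hasDerivAt_payoff α δ lam c _).deriv, (hasDerivAt_payoff α δ lam 0 x).deriv, payoff, payoff,
    payoffDrift]
  ring

lemma tangentSlope_payoff_endpoint_neg (hα : 0 < α) (hlam : 0 < lam) (hs : 0 < s)
    (hd : α * δ - lam ≠ 0) (hroot : rho α δ lam s f₀ = 0) (hbig : α < 2 * lam * f₀) (hc : 0 < c) :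
    tangentSlope s (payoff α δ lam c) (f₀ + c) < 0 := by
  have hdrift : payoffDrift α lam (f₀ + c / 2) < 0 := by
    have : payoffDrift α lam (f₀ + c / 2) = (α - 2 * lam * f₀ - lam * c) / α := by
      rw [payoffDrift]; field_simp; ring
    rw [this]
    exact div_neg_of_neg_of_pos (by linarith [mul_pos hlam hc]) hα
  rw [tangentSlope_payoff_add, tangentSlope_payoff_zero_root hα.ne' hs.ne' hd hroot, mul_zero,
    zero_add]
  refine mul_neg_of_pos_of_neg (by positivity) ?_
  have hsc := mul_neg_of_pos_of_neg (mul_pos hs hc) hdrift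
  have : 0 < 2 * (lam / α) * c := by positivity
  linarith

lemma payoffGenerator_endpoint_pos (hα : 0 < α) (hlam : 0 < lam) (hs : 0 < s)
    (hd : lam < α * δ) (hroot : rho α δ lam s f₀ = 0) (hbig : α < 2 * lam * f₀) (hc : 0 < c) :
    0 < payoffGenerator α δ lam c (f₀ + c) := by
  have hf₀ : 0 < f₀ := pos_of_mul_pos_right (hα.trans hbig) (by positivity)
  have hgen := payoffGenerator_zero_pos hα hs hd hroot (right_mem_Icc.2 hf₀.le)
  have hshift : payoffGenerator α δ lam c (f₀ + c) =
      payoffGenerator α δ lam 0 f₀ + c * (2 * lam * f₀ - α) + lam * c ^ 2 := by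
    rw [payoffGenerator, payoffGenerator]; ring
  have := mul_pos hc (sub_pos.2 hbig)
  rw [hshift]
  positivity

lemma tangentSlope_payoff_neg (hα : α ≠ 0) (hs : 0 < s) (hsα : s ^ 2 = 2 * α)
    (hd : lam ≤ α * δ) {b : ℝ} (hgen : 0 < payoffGenerator α δ lam c x)
    (hgenb : 0 < payoffGenerator α δ lam c b) (hb : tangentSlope s (payoff α δ lam c) b < 0)
    (hx : x ≤ b) : tangentSlope s (payoff α δ lam c) x < 0 := by
  have hmono := strictMonoOn_tangentSlope_payoff hα hs hsα fun t ht =>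
    pos_of_concaveOn_of_mem_Icc (concaveOn_payoffGenerator hd c) hgen hgenb ht
  exact (hmono.monotoneOn (left_mem_Icc.2 hx) (right_mem_Icc.2 hx) hx).trans_lt hb

end Boundary

noncomputable section Contact

variable {α δ lam s f₀ c c₂ z x : ℝ} {inv G : ℝ → ℝ}

/-- `exp (2 * s * z)` and `exp (2 * s * x)` are the contact points of a common tangent to the
transforms of `payoff` at `0` and at `c`, located as in the theorem; the bound `x_v(c) < x` is
expressed by the sign of `payoffGenerator`. -/
structure IsTangentPair (α δ lam s f₀ c z x : ℝ) : Prop where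
  pos : 0 < z
  lt_mid : z < 1 / (2 * δ) + c / 2
  mid_lt : 1 / (2 * δ) + c / 2 < x
  generator_pos : 0 < payoffGenerator α δ lam c x
  lt_end : x < f₀ + c
  slope_eq : tangentSlope s (payoff α δ lam 0) z = tangentSlope s (payoff α δ lam c) x
  intercept_eq : tangentIntercept s (payoff α δ lam 0) z = tangentIntercept s (payoff α δ lam c) x

/-- The function `L` of the theorem, where `inv` inverts the slope data of `payoff` at `c = 0`. -/
def tangencyGap (α δ lam s : ℝ) (inv : ℝ → ℝ) (p : ℝ × ℝ) : ℝ :=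
  tangentIntercept s (payoff α δ lam p.2) p.1 -
    tangentIntercept s (payoff α δ lam 0) (inv (tangentSlope s (payoff α δ lam p.2) p.1))

/-- The derivative of `tangencyGap` at `(x, c)` if `z` is the point where `payoff` at `0` has the
same slope data as `payoff` at `c` has at `x`. -/
def tangencyGapDeriv (α δ lam s c z x : ℝ) : ℝ × ℝ →L[ℝ] ℝ :=
  shearForm (-(Real.exp (x * s) / s * payoffGenerator α δ lam c x))
      (tangentIntercept s (payoffDrift α lam) x + s * tangentIntercept s (payoff α δ lam c) x) +
    Real.exp (2 * s * z) •
      shearForm (Real.exp (-x * s) / s * payoffGenerator α δ lam c x)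
        (tangentSlope s (payoffDrift α lam) x - s * tangentSlope s (payoff α δ lam c) x)

/-- The open set of `(x, c)` whose slope data lie in the interior of the domain of `h₁⁻¹`. -/
def tangencyDomain (α δ lam s : ℝ) : Set (ℝ × ℝ) :=
  (fun p : ℝ × ℝ => tangentSlope s (payoff α δ lam p.2) p.1) ⁻¹' Ioo (-(lam / (2 * α ^ 2))) 0

lemma isOpen_tangencyDomain (hα : α ≠ 0) (hsα : s ^ 2 = 2 * α) :
    IsOpen (tangencyDomain α δ lam s) :=
  isOpen_Ioo.preimage <| continuous_iff_continuousAt.2 fun p =>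
    (hasStrictFDerivAt_tangentSlope_payoff hα hsα δ lam p.1 p.2).continuousAt

lemma strictMonoOn_tangentSlope_payoff_zero (hα : 0 < α) (hs : 0 < s)
    (hsα : s ^ 2 = 2 * α) (hd : lam < α * δ) (hroot : rho α δ lam s f₀ = 0) :
    StrictMonoOn (tangentSlope s (payoff α δ lam 0)) (Icc 0 f₀) :=
  strictMonoOn_tangentSlope_payoff hα.ne' hs hsα fun _ =>
    payoffGenerator_zero_pos hα hs hd hroot

namespace IsTangentPair

lemma lt (h : IsTangentPair α δ lam s f₀ c z x) : z < x := h.lt_mid.trans h.mid_lt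

lemma lt_root (h : IsTangentPair α δ lam s f₀ c z x) (hα : 0 < α) (hlam : 0 < lam) (hs : 0 < s)
    (hsα : s ^ 2 = 2 * α) (hd : lam < α * δ) (hroot : rho α δ lam s f₀ = 0)
    (hbig : α < 2 * lam * f₀) (hc : 0 < c) : z < f₀ := by
  have hd' := sub_pos.2 hd
  have hf₀ : 0 < f₀ := pos_of_mul_pos_right (hα.trans hbig) (by positivity)
  have hneg := tangentSlope_payoff_neg hα.ne' hs hsα hd.le h.generator_pos
    (payoffGenerator_endpoint_pos hα hlam hs hd hroot hbig hc)
    (tangentSlope_payoff_endpoint_neg hα hlam hs hd'.ne' hroot hbig hc) h.lt_end.le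
  by_contra! hz
  rw [← h.slope_eq, tangentSlope_payoff_zero hα.ne' hs.ne' hd'.ne'] at hneg
  have := hroot.symm.trans_le (rho_le_rho hs.le hf₀.le hz)
  exact hneg.not_ge (by positivity)

lemma mem_tangencyDomain (h : IsTangentPair α δ lam s f₀ c z x) (hα : 0 < α) (hs : 0 < s)
    (hsα : s ^ 2 = 2 * α) (hd : lam < α * δ) (hroot : rho α δ lam s f₀ = 0) (hz : z < f₀) :
    (x, c) ∈ tangencyDomain α δ lam s := by
  have hmono := strictMonoOn_tangentSlope_payoff_zero hα hs hsα hd hroot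
  have hz' : z ∈ Icc 0 f₀ := ⟨h.pos.le, hz.le⟩
  have hf₀ := h.pos.le.trans hz.le
  have hleft := tangentSlope_payoff_zero_zero hs.ne' α δ lam
  have hright := tangentSlope_payoff_zero_root hα.ne' hs.ne' (sub_pos.2 hd).ne' hroot
  rw [tangencyDomain, mem_preimage, ← h.slope_eq]
  exact ⟨hleft.symm.trans_lt (hmono (left_mem_Icc.2 hf₀) hz' h.pos),
    (hmono hz' (right_mem_Icc.2 hf₀) hz).trans_eq hright⟩

lemma tangencyGapDeriv_one_zero_neg (h : IsTangentPair α δ lam s f₀ c z x) (hs : 0 < s) :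
    tangencyGapDeriv α δ lam s c z x (1, 0) < 0 := by
  have hexp : Real.exp (2 * s * z) * Real.exp (-x * s) < Real.exp (x * s) := by
    rw [← Real.exp_add, Real.exp_lt_exp]
    linarith [mul_lt_mul_of_pos_left h.lt hs]
  have hfactor : tangencyGapDeriv α δ lam s c z x (1, 0) =
      (Real.exp (2 * s * z) * Real.exp (-x * s) - Real.exp (x * s)) *
        (payoffGenerator α δ lam c x / s) := by
    simp only [tangencyGapDeriv, add_apply, smul_apply, shearForm_apply, smul_eq_mul]
    ring
  rw [hfactor]
  exact mul_neg_of_neg_of_pos (sub_neg.2 hexp) (div_pos h.generator_pos hs)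

lemma tangencyGapDeriv_one_one (h : IsTangentPair α δ lam s f₀ c z x) (hα : α ≠ 0)
    (hlam : lam ≠ 0) (hs : s ≠ 0) :
    tangencyGapDeriv α δ lam s c z x (1, 1) =
      s * (tangentIntercept s (payoff α δ lam 0) z -
          tangentSlope s (payoff α δ lam 0) z * Real.exp (2 * z * s)) +
        lam / α * (α / (2 * lam) - x - 1 / s) * Real.exp (-x * s) * Real.exp (2 * z * s) -
        lam / α * (x - α / (2 * lam) - 1 / s) * Real.exp (x * s) := by
  rw [h.slope_eq, h.intercept_eq, mul_right_comm 2 z s, ← tangentSlope_payoffDrift hα hlam hs,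
    ← neg_tangentIntercept_payoffDrift hα hlam hs]
  simp only [tangencyGapDeriv, add_apply, smul_apply, shearForm_apply, smul_eq_mul]
  ring

lemma hasDerivAt_tangencyBoundary (h : IsTangentPair α δ lam s f₀ c z (G c)) (hα : α ≠ 0)
    (hs : 0 < s) (hsα : s ^ 2 = 2 * α) (hgen : 0 < payoffGenerator α δ lam 0 z)
    (hc : c ∈ Ioo 0 c₂)
    (huniq : ∀ c ∈ Ioo 0 c₂, ∀ z x, IsTangentPair α δ lam s f₀ c z x → x = G c) :
    HasDerivAt G (1 - tangencyGapDeriv α δ lam s c z (G c) (1, 1) /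
      tangencyGapDeriv α δ lam s c z (G c) (1, 0)) c := by
  refine hasDerivAt_of_common_tangent (hasStrictDerivAt_tangentSlope_payoff hα hsα δ lam 0 z)
    (by positivity) (hasStrictDerivAt_tangentIntercept_payoff hα hsα δ lam 0 z)
    (hasStrictFDerivAt_tangentSlope_payoff hα hsα δ lam (G c) c)
    (hasStrictFDerivAt_tangentIntercept_payoff hα hsα δ lam (G c) c)
    (h.tangencyGapDeriv_one_zero_neg hs).ne h.slope_eq h.intercept_eq ?_
  have hopen : IsOpen {w : ℝ × ℝ × ℝ | 0 < w.1 ∧ w.1 < 1 / (2 * δ) + w.2.2 / 2 ∧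
      1 / (2 * δ) + w.2.2 / 2 < w.2.1 ∧ 0 < payoffGenerator α δ lam w.2.2 w.2.1 ∧
      w.2.1 < f₀ + w.2.2 ∧ 0 < w.2.2 ∧ w.2.2 < c₂} := by
    simp only [ofPred_and, payoffGenerator]
    iterate 6 refine (isOpen_lt (by fun_prop) (by fun_prop)).inter ?_
    exact isOpen_lt (by fun_prop) (by fun_prop)
  filter_upwards [hopen.mem_nhds
    ⟨h.pos, h.lt_mid, h.mid_lt, h.generator_pos, h.lt_end, hc.1, hc.2⟩]
    with w ⟨hpos, hlt_mid, hmid_lt, hgenerator, hlt_end, hc⟩ hslope hintercept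
  exact huniq w.2.2 hc w.1 w.2.1
    ⟨hpos, hlt_mid, hmid_lt, hgenerator, hlt_end, hslope, hintercept⟩

end IsTangentPair

theorem hasStrictFDerivAt_tangencyGap (hα : 0 < α) (hs : 0 < s) (hsα : s ^ 2 = 2 * α)
    (hd : lam < α * δ) (hroot : rho α δ lam s f₀ = 0)
    (hinv : ∀ w ∈ Icc (-(lam / (2 * α ^ 2))) 0,
      inv w ∈ Icc 0 f₀ ∧ tangentSlope s (payoff α δ lam 0) (inv w) = w)
    (hz : z ∈ Ioo 0 f₀)
    (hslope : tangentSlope s (payoff α δ lam 0) z = tangentSlope s (payoff α δ lam c) x) :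
    HasStrictFDerivAt (tangencyGap α δ lam s inv) (tangencyGapDeriv α δ lam s c z x) (x, c) := by
  have hgen := payoffGenerator_zero_pos hα hs hd hroot (Ioo_subset_Icc_self hz)
  have hleft := leftInvOn_Icc_of_strictMonoOn
    (strictMonoOn_tangentSlope_payoff_zero hα hs hsα hd hroot)
    (tangentSlope_payoff_zero_zero hs.ne' α δ lam)
    (tangentSlope_payoff_zero_root hα.ne' hs.ne' (sub_pos.2 hd).ne' hroot) hinv
  exact hasStrictFDerivAt_sub_comp_leftInverse
    (hasStrictDerivAt_tangentSlope_payoff hα.ne' hsα δ lam 0 z) (by positivity)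
    (hasStrictDerivAt_tangentIntercept_payoff hα.ne' hsα δ lam 0 z)
    (eventually_of_mem (Icc_mem_nhds hz.1 hz.2) hleft)
    (hasStrictFDerivAt_tangentSlope_payoff hα.ne' hsα δ lam x c)
    (hasStrictFDerivAt_tangentIntercept_payoff hα.ne' hsα δ lam x c) hslope

theorem differentiableOn_tangencyGap (hα : 0 < α) (hs : 0 < s) (hsα : s ^ 2 = 2 * α)
    (hd : lam < α * δ) (hf₀ : 0 ≤ f₀) (hroot : rho α δ lam s f₀ = 0)
    (hinv : ∀ w ∈ Icc (-(lam / (2 * α ^ 2))) 0,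
      inv w ∈ Icc 0 f₀ ∧ tangentSlope s (payoff α δ lam 0) (inv w) = w) :
    DifferentiableOn ℝ (tangencyGap α δ lam s inv) (tangencyDomain α δ lam s) := by
  intro p hp
  have hz := mapsTo_Ioo_of_strictMonoOn
    (strictMonoOn_tangentSlope_payoff_zero hα hs hsα hd hroot) hf₀
    (tangentSlope_payoff_zero_zero hs.ne' α δ lam)
    (tangentSlope_payoff_zero_root hα.ne' hs.ne' (sub_pos.2 hd).ne' hroot) hinv hp
  have hslope := (hinv _ (Ioo_subset_Icc_self hp)).2
  exact (hasStrictFDerivAt_tangencyGap hα hs hsα hd hroot hinv hz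
    hslope).hasFDerivAt.differentiableAt.differentiableWithinAt

theorem IsTangentPair.differentiableOn_and_hasDerivAt {L : ℝ → ℝ → ℝ} (hα : 0 < α)
    (hlam : 0 < lam) (hs : 0 < s) (hsα : s ^ 2 = 2 * α) (hd : lam < α * δ)
    (hroot : rho α δ lam s f₀ = 0) (hbig : α < 2 * lam * f₀)
    (hinv : ∀ w ∈ Icc (-(lam / (2 * α ^ 2))) 0,
      inv w ∈ Icc 0 f₀ ∧ tangentSlope s (payoff α δ lam 0) (inv w) = w)
    (hL : EqOn (fun p : ℝ × ℝ => L p.1 p.2) (tangencyGap α δ lam s inv) (tangencyDomain α δ lam s))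
    (hc : c ∈ Ioo 0 c₂) (h : IsTangentPair α δ lam s f₀ c z (G c))
    (huniq : ∀ c ∈ Ioo 0 c₂, ∀ z x, IsTangentPair α δ lam s f₀ c z x → x = G c) :
    (G c, c) ∈ tangencyDomain α δ lam s ∧
      DifferentiableOn ℝ (fun p : ℝ × ℝ => L p.1 p.2) (tangencyDomain α δ lam s) ∧
      deriv (fun x => L x c) (G c) < 0 ∧
      HasDerivAt G (1 - tangencyGapDeriv α δ lam s c z (G c) (1, 1) /
        deriv (fun x => L x c) (G c)) c := by
  have hz : z ∈ Ioo 0 f₀ := ⟨h.pos, h.lt_root hα hlam hs hsα hd hroot hbig hc.1⟩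
  have hmem := h.mem_tangencyDomain hα hs hsα hd hroot hz.2
  have hgap := hasStrictFDerivAt_tangencyGap hα hs hsα hd hroot hinv hz h.slope_eq
  rw [deriv_slice_of_eqOn (isOpen_tangencyDomain hα.ne' hsα) hmem hL hgap]
  exact ⟨hmem,
    (differentiableOn_tangencyGap hα hs hsα hd (hz.1.trans hz.2).le hroot hinv).congr hL,
    h.tangencyGapDeriv_one_zero_neg hs,
    h.hasDerivAt_tangencyBoundary hα.ne' hs hsα
      (payoffGenerator_zero_pos hα hs hd hroot (Ioo_subset_Icc_self hz)) hc huniq⟩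

end Contact

section OriginalScale

variable {α δ lam s f₀ b c v x y y₁ y₂ z : ℝ} {Hl Hr k : ℝ → ℝ}

/-- The tangency system together with the location of the contact points in the original scale,
where `v` stands for `x_v(c)`. -/
def LocatedTangency (δ s f₀ c v : ℝ) (Hl Hr : ℝ → ℝ) (y₁ y₂ : ℝ) : Prop :=
  let yc := Real.exp (2 * s * (1 / (2 * δ) + c / 2))
  let yv := max yc (Real.exp (2 * s * v))
  1 < y₁ ∧ y₁ < yc ∧ yc ≤ yv ∧ yv < y₂ ∧ y₂ < Real.exp (2 * s * (f₀ + c)) ∧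
    TangencySystem Hl Hr y₁ y₂

lemma log_div_lt (hs : 0 < s) (hy : 0 < y) (hyb : y < Real.exp (2 * s * b)) :
    Real.log y / (2 * s) < b := by
  rwa [div_lt_iff₀' (by positivity), Real.log_lt_iff_lt_exp hy]

lemma naturalTransform_payoff_zero (hsα : s ^ 2 = 2 * α) (δ lam y : ℝ) :
    naturalTransform s (payoff α δ lam 0) y =
      √y * (-(lam / α ^ 2) + (δ - lam / α) / (8 * α) * Real.log y ^ 2) := by
  rw [naturalTransform, payoff, div_pow, mul_pow, hsα]
  ring

theorem isTangentPair_iff_locatedTangency (hs : 0 < s) (hsα : s ^ 2 = 2 * α) (hd : lam ≤ α * δ)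
    (hend : 0 < payoffGenerator α δ lam c (f₀ + c)) (hv : payoffGenerator α δ lam c v = 0)
    (hvend : v < f₀ + c)
    (hHl : ∀ y, 0 < y →
      Hl y = √y * (-(lam / α ^ 2) + (δ - lam / α) / (8 * α) * Real.log y ^ 2))
    (hHr : ∀ y, 0 < y → Hr y = naturalTransform s k y)
    (hk : ∀ t, t ≤ f₀ + c → k t = payoff α δ lam c t) :
    IsTangentPair α δ lam s f₀ c z x ↔
      LocatedTangency δ s f₀ c v Hl Hr (Real.exp (2 * s * z)) (Real.exp (2 * s * x)) := by
  have h2s : 0 < 2 * s := by positivity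
  simp only [LocatedTangency, Real.one_lt_exp_iff, Real.exp_lt_exp, max_lt_iff,
    mul_lt_mul_iff_right₀ h2s, mul_pos_iff_of_pos_left h2s, le_max_left, true_and]
  have hl : Hl =ᶠ[𝓝 (Real.exp (2 * s * z))] naturalTransform s (payoff α δ lam 0) :=
    eventually_of_mem (Ioi_mem_nhds (Real.exp_pos _)) fun y hy =>
      (hHl y hy).trans (naturalTransform_payoff_zero hsα δ lam y).symm
  have hr (hx : x < f₀ + c) :
      Hr =ᶠ[𝓝 (Real.exp (2 * s * x))] naturalTransform s (payoff α δ lam c) := by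
    filter_upwards [Ioo_mem_nhds (Real.exp_pos _)
      (Real.exp_lt_exp.2 (mul_lt_mul_of_pos_left hx h2s))] with y ⟨hy, hyend⟩
    rw [hHr y hy, naturalTransform, hk _ (log_div_lt hs hy hyend).le, naturalTransform]
  have hsystem (hx : x < f₀ + c) := tangencySystem_iff hs.ne' hl
    (hasDerivAt_payoff α δ lam 0 z).differentiableAt (hr hx)
    (hasDerivAt_payoff α δ lam c x).differentiableAt
  have hgen (hx : x < f₀ + c) : 0 < payoffGenerator α δ lam c x ↔ v < x :=
    pos_iff_lt_of_concaveOn (concaveOn_payoffGenerator hd c) hv hend hvend hx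
  constructor
  · rintro ⟨hpos, hlt, hgt, hgenerator, hx, hslope, hintercept⟩
    exact ⟨hpos, hlt, ⟨hgt, (hgen hx).1 hgenerator⟩, hx, (hsystem hx).2 ⟨hslope, hintercept⟩⟩
  · rintro ⟨hpos, hlt, ⟨hgt, hvx⟩, hx, htangency⟩
    obtain ⟨hslope, hintercept⟩ := (hsystem hx).1 htangency
    exact ⟨hpos, hlt, hgt, (hgen hx).2 hvx, hx, hslope, hintercept⟩

lemma LocatedTangency.exp_log_div (h : LocatedTangency δ s f₀ c v Hl Hr y₁ y₂) (hs : s ≠ 0) :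
    LocatedTangency δ s f₀ c v Hl Hr (Real.exp (2 * s * (Real.log y₁ / (2 * s))))
      (Real.exp (2 * s * (Real.log y₂ / (2 * s)))) := by
  have hy₁ : 0 < y₁ := zero_lt_one.trans h.1
  have hy₂ : 0 < y₂ := (Real.exp_pos _).trans_le (h.2.2.1.trans h.2.2.2.1.le)
  have hcancel {y : ℝ} (hy : 0 < y) : Real.exp (2 * s * (Real.log y / (2 * s))) = y := by
    rw [mul_div_cancel₀ _ (mul_ne_zero two_ne_zero hs), Real.exp_log hy]
  rwa [hcancel hy₁, hcancel hy₂]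

end OriginalScale

/-- for each c ∈ (0,c₂), L is well defined and differentiable in an open
neighbourhood of (G(c),c), ∂L/∂x(G(c),c) < 0, G is differentiable at c and
G'(c) = 1 − q(G(c);F(c)) / L_x(G(c),c). -/
theorem stmt_15 (α δ lam : ℝ) (hα : 0 < α) (hδ : 0 < δ) (hlam : 0 < lam)
    (hltd : lam < α * δ)
    (ρ : ℝ → ℝ)
    (hρ : ∀ x, ρ x = x ^ 2 + 2 * x / Real.sqrt (2 * α) - (lam / α) / (α * δ - lam))
    (f₀ : ℝ)
    (hf₀ : f₀ = (1 / Real.sqrt (2 * α)) * (Real.sqrt ((α * δ + lam) / (α * δ - lam)) - 1))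
    (hf₀big : α / (2 * lam) < f₀)
    (Ψ : ℝ → ℝ) (hΨ : ∀ x, Ψ x = Real.exp (2 * Real.sqrt (2 * α) * x))
    (Hl : ℝ → ℝ)
    (hHl : ∀ y, 0 < y → Hl y = Real.sqrt y *
      (-(lam / α ^ 2) + ((δ - lam / α) / (8 * α)) * (Real.log y) ^ 2))
    (B₀ : ℝ)
    (hB₀ : B₀ = -(2 * f₀ / (α * Real.sqrt (2 * α))) * (α * δ - lam) *
      Real.exp (f₀ * Real.sqrt (2 * α)))
    (hr1 hr2 hr Hr : ℝ → ℝ → ℝ)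
    (hhr1 : ∀ c x, hr1 c x = δ * c * (c - 2 * x) + (δ - lam / α) * x ^ 2 + c - lam / α ^ 2)
    (hhr2 : ∀ c x, hr2 c x = (lam / α) * c * (c - 2 * x) + c +
      B₀ * Real.exp (-(x - c) * Real.sqrt (2 * α)))
    (hhra : ∀ c x, x ≤ f₀ + c → hr c x = hr1 c x)
    (hhrb : ∀ c x, f₀ + c ≤ x → hr c x = hr2 c x)
    (hHr : ∀ c y, 0 < y → Hr c y = Real.sqrt y * hr c (Real.log y / (2 * Real.sqrt (2 * α))))
    (xv : ℝ → ℝ)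
    (hxv : ∀ c, 0 < c →
      (xv c < f₀ + c ∧
        δ - (α * δ - lam) * (xv c) ^ 2 + c * α * (δ * (2 * xv c - c) - 1) = 0 ∧
        ∀ x, x < f₀ + c →
          δ - (α * δ - lam) * x ^ 2 + c * α * (δ * (2 * x - c) - 1) = 0 → x = xv c))
    -- the functions h₁, h₂, h₃, h₄ and q:
    (h₁ h₂ h₃ h₄ : ℝ → ℝ)
    (hh₁ : ∀ x, h₁ x = ((α * δ - lam) / (2 * α)) * Real.exp (-x * Real.sqrt (2 * α)) * ρ x)
    (hh₂ : ∀ x, h₂ x = ((α * δ - lam) / (2 * α)) * Real.exp (x * Real.sqrt (2 * α)) *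
      (ρ x - 4 * x / Real.sqrt (2 * α)))
    (hh₃ : ∀ x, h₃ x = (lam / α) * (α / (2 * lam) - x - 1 / Real.sqrt (2 * α)) *
      Real.exp (-x * Real.sqrt (2 * α)))
    (hh₄ : ∀ x, h₄ x = (lam / α) * (x - α / (2 * lam) - 1 / Real.sqrt (2 * α)) *
      Real.exp (x * Real.sqrt (2 * α)))
    (q : ℝ → ℝ → ℝ)
    (hq : ∀ x z, q x z = Real.sqrt (2 * α) *
      (h₂ z - h₁ z * Real.exp (2 * z * Real.sqrt (2 * α))) +
      h₃ x * Real.exp (2 * z * Real.sqrt (2 * α)) - h₄ x)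
    -- the inverse of h₁ on [−λ/(2α²),0]:
    (h₁inv : ℝ → ℝ)
    (hh₁inv : ∀ w ∈ Set.Icc (-(lam / (2 * α ^ 2))) (0 : ℝ),
      h₁inv w ∈ Set.Icc 0 f₀ ∧ h₁ (h₁inv w) = w)
    -- Ĥ₃, Ĥ₄ and L:
    (H₃ H₄ : ℝ → ℝ → ℝ)
    (hH₃ : ∀ x c, H₃ x c = (Real.exp (-x * Real.sqrt (2 * α)) / (2 * Real.sqrt (2 * α))) *
      (deriv (hr1 c) x + Real.sqrt (2 * α) * hr1 c x))
    (hH₄ : ∀ x c, H₄ x c = (Real.exp (x * Real.sqrt (2 * α)) / (2 * Real.sqrt (2 * α))) *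
      (-deriv (hr1 c) x + Real.sqrt (2 * α) * hr1 c x))
    (L : ℝ → ℝ → ℝ)
    (hL : ∀ x c, H₃ x c ∈ Set.Icc (-(lam / (2 * α ^ 2))) (0 : ℝ) →
      L x c = H₄ x c - h₂ (h₁inv (H₃ x c)))
    -- the tangency-pair functions and the moving boundaries F, G:
    (c₂ : ℝ) (hc₂pos : 0 < c₂)
    (yh₁ yh₂ : ℝ → ℝ)
    (hpair : ∀ c, 0 < c → c < c₂ →
      (1 < yh₁ c ∧ yh₁ c < Ψ (1 / (2 * δ) + c / 2) ∧
        Ψ (1 / (2 * δ) + c / 2) ≤ max (Ψ (1 / (2 * δ) + c / 2)) (Ψ (xv c)) ∧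
        max (Ψ (1 / (2 * δ) + c / 2)) (Ψ (xv c)) < yh₂ c ∧ yh₂ c < Ψ (f₀ + c) ∧
        TangencySystem Hl (Hr c) (yh₁ c) (yh₂ c)))
    (huniq : ∀ c, 0 < c → c < c₂ → ∀ y₁ y₂ : ℝ,
      1 < y₁ → y₁ < Ψ (1 / (2 * δ) + c / 2) →
      Ψ (1 / (2 * δ) + c / 2) ≤ max (Ψ (1 / (2 * δ) + c / 2)) (Ψ (xv c)) →
      max (Ψ (1 / (2 * δ) + c / 2)) (Ψ (xv c)) < y₂ → y₂ < Ψ (f₀ + c) →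
      TangencySystem Hl (Hr c) y₁ y₂ → y₁ = yh₁ c ∧ y₂ = yh₂ c)
    (F G : ℝ → ℝ)
    (hF : ∀ c, F c = Real.log (yh₁ c) / (2 * Real.sqrt (2 * α)))
    (hG : ∀ c, G c = Real.log (yh₂ c) / (2 * Real.sqrt (2 * α))) :
    ∀ c, 0 < c → c < c₂ →
      (∃ U : Set (ℝ × ℝ), IsOpen U ∧ (G c, c) ∈ U ∧
        (∀ p ∈ U, H₃ p.1 p.2 ∈ Set.Icc (-(lam / (2 * α ^ 2))) (0 : ℝ)) ∧
        DifferentiableOn ℝ (fun p : ℝ × ℝ => L p.1 p.2) U) ∧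
      deriv (fun x => L x c) (G c) < 0 ∧
      DifferentiableAt ℝ G c ∧
      deriv G c = 1 - q (G c) (F c) / deriv (fun x => L x c) (G c) := by
  set s := √(2 * α)
  have hs : 0 < s := Real.sqrt_pos.2 (by positivity)
  have hsα : s ^ 2 = 2 * α := Real.sq_sqrt (by positivity)
  have hd : 0 < α * δ - lam := sub_pos.2 hltd
  have hroot : rho α δ lam s f₀ = 0 := hf₀ ▸ rho_root hα.ne' hs.ne' hsα hd.ne' (by positivity)
  have hbig : α < 2 * lam * f₀ := (div_lt_iff₀' (by positivity)).1 hf₀big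
  obtain rfl : Ψ = fun x => Real.exp (2 * s * x) := funext hΨ
  obtain rfl : hr1 = payoff α δ lam := funext₂ hhr1
  obtain rfl : H₃ = fun x c => tangentSlope s (payoff α δ lam c) x := funext₂ hH₃
  obtain rfl : H₄ = fun x c => tangentIntercept s (payoff α δ lam c) x := funext₂ hH₄
  obtain rfl : ρ = rho α δ lam s := funext hρ
  obtain rfl : h₁ = tangentSlope s (payoff α δ lam 0) :=
    funext fun x => (hh₁ x).trans (tangentSlope_payoff_zero hα.ne' hs.ne' hd.ne' x).symm
  obtain rfl : h₂ = tangentIntercept s (payoff α δ lam 0) :=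
    funext fun x => (hh₂ x).trans (tangentIntercept_payoff_zero hα.ne' hs.ne' hd.ne' x).symm
  have hiff {c z x} (hc : 0 < c) := isTangentPair_iff_locatedTangency (z := z) (x := x) hs hsα
    hltd.le (payoffGenerator_endpoint_pos hα hlam hs hltd hroot hbig hc) (hxv c hc).2.1
    (hxv c hc).1 hHl (hHr c) (hhra c)
  intro c hc hcc₂
  have hpairFG : IsTangentPair α δ lam s f₀ c (F c) (G c) := by
    rw [hF, hG, hiff hc]
    exact LocatedTangency.exp_log_div (hpair c hc hcc₂) hs.ne'
  obtain ⟨hmem, hdiff, hneg, hderiv⟩ := hpairFG.differentiableOn_and_hasDerivAt hα hlam hs hsα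
    hltd hroot hbig hh₁inv (fun p hp => hL p.1 p.2 (Ioo_subset_Icc_self hp)) ⟨hc, hcc₂⟩
    fun c hc z x h => by
      obtain ⟨hone, hlt, hle, hgt, hend, hsys⟩ := (hiff hc.1).1 h
      rw [hG, ← (huniq c hc.1 hc.2 _ _ hone hlt hle hgt hend hsys).2, log_exp_div hs.ne']
  refine ⟨⟨_, isOpen_tangencyDomain hα.ne' hsα, hmem, fun p hp => Ioo_subset_Icc_self hp, hdiff⟩,
    hneg, hderiv.differentiableAt, ?_⟩
  rw [hderiv.deriv, hpairFG.tangencyGapDeriv_one_one hα.ne' hlam.ne' hs.ne', hq, hh₃, hh₄]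
end
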